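/- arXiv:1405.3375 — 2 statements merged into one kernel-verified Lean document; each statement's English description precedes it below -/
import Mathlib

section
/- For any R-module M, Gid_R(M) ≤ Gwid_R(M); and if Gwid_R(M) < ∞ then Gid_R(M) = Gwid_R(M), where Gid_R denotes Gorenstein injective dimension. -/
open CategoryTheory

universe u

noncomputable section

variable (R : Type u) [Ring R]

/-- Vanishing of `Ext^n_R(N, M)` for left `R`-modules, expressed via the `Ext` bifunctor
on the `ℤ`-linear abelian category `ModuleCat R`. -/
def ExtVanish (n : ℕ) (N M : ModuleCat.{u} R) : Prop :=
  Subsingleton (((_root_.Ext ℤ (ModuleCat.{u} R) n).obj (Opposite.op N)).obj M)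

/-- An `R`-module is super finitely presented if it admits a resolution by
finitely generated projective modules. -/
def SuperFinitelyPresented (N : ModuleCat.{u} R) : Prop :=
  ∃ (F : ℕ → ModuleCat.{u} R) (d : ∀ n, F (n + 1) →ₗ[R] F n) (ε : F 0 →ₗ[R] N),
    (∀ n, Module.Finite R (F n)) ∧ (∀ n, Module.Projective R (F n)) ∧
    Function.Surjective ε ∧ Function.Exact (d 0) ε ∧
    (∀ n, Function.Exact (d (n + 1)) (d n))

/-- An `R`-module `W` is weak injective if `Ext^1_R(N, W) = 0` for every super finitely
presented module `N`. -/
def WeakInjective (W : ModuleCat.{u} R) : Prop :=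
  ∀ N : ModuleCat.{u} R, SuperFinitelyPresented R N → ExtVanish R 1 N W

/-- `wid_R M ≤ n` : `Ext^{n+1}_R(N, M) = 0` for every super finitely presented `N`. -/
def WidLE (M : ModuleCat.{u} R) (n : ℕ) : Prop :=
  ∀ N : ModuleCat.{u} R, SuperFinitelyPresented R N → ExtVanish R (n + 1) N M

/-- The weak injective dimension, as an element of `ℕ∞`. -/
def Wid (M : ModuleCat.{u} R) : ℕ∞ :=
  sInf {c : ℕ∞ | ∃ n : ℕ, c = n ∧ WidLE R M n}

/-- A doubly infinite exact complex of injective modules which stays exact after applying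
`Hom_R(W, -)` for every module `W` in the test class `𝒯`. -/
def IsTotallyAcyclicInjComplex (𝒯 : ModuleCat.{u} R → Prop)
    (I : ℤ → ModuleCat.{u} R) (d : ∀ n : ℤ, I n →ₗ[R] I (n + 1)) : Prop :=
  (∀ n, Module.Injective R (I n)) ∧
  (∀ n, Function.Exact (d n) (d (n + 1))) ∧
  (∀ W : ModuleCat.{u} R, 𝒯 W → ∀ n,
    Function.Exact (fun g : W →ₗ[R] I n => (d n).comp g)
      (fun g : W →ₗ[R] I (n + 1) => (d (n + 1)).comp g))

/-- `M` is Gorenstein injective relative to the test class `𝒯` : `M` is the cokernel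
`Coker (I_1 → I_0)` of a `Hom(𝒯, -)`-exact exact complex of injective modules. -/
def GorensteinRelInjective (𝒯 : ModuleCat.{u} R → Prop) (M : ModuleCat.{u} R) : Prop :=
  ∃ (I : ℤ → ModuleCat.{u} R) (d : ∀ n : ℤ, I n →ₗ[R] I (n + 1)) (π : I 0 →ₗ[R] M),
    IsTotallyAcyclicInjComplex R 𝒯 I d ∧
    Function.Surjective π ∧ Function.Exact (d (-1)) π

/-- Gorenstein weak injective modules: the test class is that of weak injective modules. -/
def GorensteinWeakInjective (M : ModuleCat.{u} R) : Prop :=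
  GorensteinRelInjective R (WeakInjective R) M

/-- Gorenstein injective modules: the test class is that of injective modules. -/
def GorensteinInjective (M : ModuleCat.{u} R) : Prop :=
  GorensteinRelInjective R (fun E => Module.Injective R E) M

/-- The data of an exact sequence `0 → M → G^0 → ⋯ → G^n → 0` (the modules `G^i` for
`i > n` being trivial). -/
def IsFiniteCoresolution (M : ModuleCat.{u} R) (n : ℕ) (G : ℕ → ModuleCat.{u} R)
    (d : ∀ i, G i →ₗ[R] G (i + 1)) (ε : M →ₗ[R] G 0) : Prop :=
  Function.Injective ε ∧ Function.Exact ε (d 0) ∧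
  (∀ i, Function.Exact (d i) (d (i + 1))) ∧
  (∀ i, n < i → ∀ x : G i, x = 0)

/-- `Gwid_R M ≤ n` : `M` has a coresolution of length `n` by Gorenstein weak injective
modules. -/
def GwidLE (M : ModuleCat.{u} R) (n : ℕ) : Prop :=
  ∃ (G : ℕ → ModuleCat.{u} R) (d : ∀ i, G i →ₗ[R] G (i + 1)) (ε : M →ₗ[R] G 0),
    IsFiniteCoresolution R M n G d ε ∧ ∀ i, GorensteinWeakInjective R (G i)

/-- The Gorenstein weak injective dimension, as an element of `ℕ∞`. -/
def Gwid (M : ModuleCat.{u} R) : ℕ∞ :=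
  sInf {c : ℕ∞ | ∃ n : ℕ, c = n ∧ GwidLE R M n}

/-- `Gid_R M ≤ n`, via coresolutions by Gorenstein injective modules. -/
def GidLE (M : ModuleCat.{u} R) (n : ℕ) : Prop :=
  ∃ (G : ℕ → ModuleCat.{u} R) (d : ∀ i, G i →ₗ[R] G (i + 1)) (ε : M →ₗ[R] G 0),
    IsFiniteCoresolution R M n G d ε ∧ ∀ i, GorensteinInjective R (G i)

/-- The Gorenstein injective dimension, as an element of `ℕ∞`. -/
def Gid (M : ModuleCat.{u} R) : ℕ∞ :=
  sInf {c : ℕ∞ | ∃ n : ℕ, c = n ∧ GidLE R M n}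

/-- `id_R M ≤ n`, via coresolutions by injective modules. -/
def IdLE (M : ModuleCat.{u} R) (n : ℕ) : Prop :=
  ∃ (G : ℕ → ModuleCat.{u} R) (d : ∀ i, G i →ₗ[R] G (i + 1)) (ε : M →ₗ[R] G 0),
    IsFiniteCoresolution R M n G d ε ∧ ∀ i, Module.Injective R (G i)

/-- The injective dimension, as an element of `ℕ∞`. -/
def Idim (M : ModuleCat.{u} R) : ℕ∞ :=
  sInf {c : ℕ∞ | ∃ n : ℕ, c = n ∧ IdLE R M n}

/-- The data of an exact sequence `0 → P_n → ⋯ → P_0 → M → 0`. -/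
def IsFiniteResolution (M : ModuleCat.{u} R) (n : ℕ) (P : ℕ → ModuleCat.{u} R)
    (d : ∀ i, P (i + 1) →ₗ[R] P i) (ε : P 0 →ₗ[R] M) : Prop :=
  Function.Surjective ε ∧ Function.Exact (d 0) ε ∧
  (∀ i, Function.Exact (d (i + 1)) (d i)) ∧
  (∀ i, n < i → ∀ x : P i, x = 0)

/-- `pd_R M ≤ n`, via resolutions by projective modules. -/
def PdLE (M : ModuleCat.{u} R) (n : ℕ) : Prop :=
  ∃ (P : ℕ → ModuleCat.{u} R) (d : ∀ i, P (i + 1) →ₗ[R] P i) (ε : P 0 →ₗ[R] M),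
    IsFiniteResolution R M n P d ε ∧ ∀ i, Module.Projective R (P i)

end

variable (R : Type u) [Ring R]

/-- A short exact sequence `0 → L → M → N → 0` of `R`-modules. -/
def ShortExactSeq (L M N : ModuleCat.{u} R) (f : L →ₗ[R] M) (g : M →ₗ[R] N) : Prop :=
  Function.Injective f ∧ Function.Surjective g ∧ Function.Exact f g

/-- Exactness of `0 → Hom(C, X) → Hom(B, X) → Hom(A, X) → 0` induced by
`0 → A → B → C → 0`. -/
def HomContraExact (X : ModuleCat.{u} R) {A B C : ModuleCat.{u} R}
    (f : A →ₗ[R] B) (g : B →ₗ[R] C) : Prop :=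
  Function.Injective (fun h : C →ₗ[R] X => h.comp g) ∧
  Function.Exact (fun h : C →ₗ[R] X => h.comp g) (fun h : B →ₗ[R] X => h.comp f) ∧
  Function.Surjective (fun h : B →ₗ[R] X => h.comp f)

/-- A short exact sequence is `GWI`-copure exact if `Hom_R(-, X)` leaves it exact for
every Gorenstein weak injective module `X`. -/
def GWICopureExact {A B C : ModuleCat.{u} R} (f : A →ₗ[R] B) (g : B →ₗ[R] C) : Prop :=
  ShortExactSeq R A B C f g ∧
  ∀ X : ModuleCat.{u} R, GorensteinWeakInjective R X → HomContraExact R X f g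

/-- `M` is `GWI`-copure injective if `Hom_R(-, M)` is exact on every `GWI`-copure exact
sequence. -/
def GWICopureInjectiveMod (M : ModuleCat.{u} R) : Prop :=
  ∀ (A B C : ModuleCat.{u} R) (f : A →ₗ[R] B) (g : B →ₗ[R] C),
    GWICopureExact R f g → HomContraExact R M f g

/-- `φ : M → G` is a Gorenstein weak injective preenvelope of `M`. -/
def GWIPreenvelope (M G : ModuleCat.{u} R) (φ : M →ₗ[R] G) : Prop :=
  GorensteinWeakInjective R G ∧
  ∀ G' : ModuleCat.{u} R, GorensteinWeakInjective R G' →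
    ∀ f : M →ₗ[R] G', ∃ g : G →ₗ[R] G', g.comp φ = f

/-- A `WI`-pure Tate injective resolution of `M` : an injective resolution
`0 → M → E^0 → E^1 → ⋯`, a `WI`-pure exact complex `T` of injectives, and a chain map
`u : E → T` which is an isomorphism in all sufficiently large degrees. -/
def WIPureTateInjectiveResolution (M : ModuleCat.{u} R)
    (E : ℕ → ModuleCat.{u} R) (dE : ∀ n, E n →ₗ[R] E (n + 1)) (ε : M →ₗ[R] E 0)
    (T : ℤ → ModuleCat.{u} R) (dT : ∀ n : ℤ, T n →ₗ[R] T (n + 1))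
    (u : ∀ n : ℕ, E n →ₗ[R] T n) : Prop :=
  (∀ n, Module.Injective R (E n)) ∧ Function.Injective ε ∧
  Function.Exact ε (dE 0) ∧ (∀ n, Function.Exact (dE n) (dE (n + 1))) ∧
  IsTotallyAcyclicInjComplex R (WeakInjective R) T dT ∧
  (∀ n : ℕ, (dT n).comp (u n) = (u (n + 1)).comp (dE n)) ∧
  ∃ N : ℕ, ∀ n, N ≤ n → Function.Bijective (u n)

/-- Vanishing of the relative Tate cohomology `Êxt^i_GWI(N, M)` for all `i ∈ ℤ`,
computed from the `WI`-pure exact complex `T` : the complex `Hom_R(N, T)` is exact. -/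
def ExtHatVanishesAll (N : ModuleCat.{u} R) (T : ℤ → ModuleCat.{u} R)
    (dT : ∀ n : ℤ, T n →ₗ[R] T (n + 1)) : Prop :=
  ∀ n : ℤ, Function.Exact (fun g : N →ₗ[R] T n => (dT n).comp g)
    (fun g : N →ₗ[R] T (n + 1) => (dT (n + 1)).comp g)

/-!
Let `𝒯` be a class of modules containing the injective ones, such as the weak injective modules. A
`𝒯`-totally acyclic complex of injectives is then also totally acyclic in the usual sense, which
gives the inequality. For the equality, an `n`-step coresolution of `M` by Gorenstein injective
modules forces `Ext^i(E, M) = 0` for all injective `E` and `i > n`. Passing to the `n`-th cosyzygy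
in a finite coresolution by `𝒯`-Gorenstein injective modules, it remains to see that a module `M` of
finite `𝒯`-Gorenstein injective dimension with `Ext^i(E, M) = 0` for all `i > 0` is `𝒯`-Gorenstein
injective. Inductively there is an exact sequence `0 → M → G → C → 0` with `G` and `C` such modules.
Choose `0 → K → I → C → 0` with `I` injective and `K` again `𝒯`-Gorenstein injective, and let
`X = G ×_C I`. Then `X` is an extension of `G` by `K`, and `0 → M → X → I → 0` splits, so `M` is the
cokernel of a monomorphism `I → X` of `𝒯`-Gorenstein injective modules.
-/

namespace RelativeGorenstein

section AbelianCategory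

open Limits
open scoped ZeroObject

universe w v v₁

variable {𝒜 : Type v₁} [Category.{v} 𝒜] [Abelian 𝒜]

/-- There is a short exact sequence `0 → A → B → C → 0`. The maps are left out, since dimension
arguments only use which objects fit into such a sequence. -/
def HasShortExact (A B C : 𝒜) : Prop :=
  ∃ (f : A ⟶ B) (g : B ⟶ C) (w : f ≫ g = 0), (ShortComplex.mk f g w).ShortExact

namespace HasShortExact

variable {A B C C' H I K L Q : 𝒜}

lemma of_mono (f : A ⟶ B) [Mono f] : HasShortExact A B (cokernel f) :=
  ⟨f, cokernel.π f, cokernel.condition f,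
    .mk' (ShortComplex.exact_cokernel f) inferInstance inferInstance⟩

lemma of_isZero_left (hA : IsZero A) (e : B ≅ C) : HasShortExact A B C :=
  ⟨0, e.hom, zero_comp,
    .mk' ((ShortComplex.exact_iff_mono _ rfl).2 inferInstance) (hA.mono 0) inferInstance⟩

lemma of_isZero_right (hC : IsZero C) (e : A ≅ B) : HasShortExact A B C :=
  ⟨e.hom, 0, comp_zero,
    .mk' ((ShortComplex.exact_iff_epi _ rfl).2 inferInstance) inferInstance (hC.epi 0)⟩

lemma of_iso_right (h : HasShortExact A B C) (e : C ≅ C') : HasShortExact A B C' := by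
  obtain ⟨f, g, w, h⟩ := h
  exact ⟨f, g ≫ e.hom, by rw [reassoc_of% w, zero_comp], ShortComplex.shortExact_of_iso
    (ShortComplex.isoMk (S₁ := .mk f g w) (.refl _) (.refl _) e) h⟩

lemma of_iso_middle {B' : 𝒜} (h : HasShortExact A B C) (e : B ≅ B') : HasShortExact A B' C := by
  obtain ⟨f, g, w, h⟩ := h
  exact ⟨f ≫ e.hom, e.inv ≫ g, by simp [w], ShortComplex.shortExact_of_iso
    (ShortComplex.isoMk (S₁ := .mk f g w) (.refl _) e (.refl _)) h⟩

lemma of_forall_lift {f : A ⟶ B} {g : B ⟶ C} [Mono f] [Epi g] (w : f ≫ g = 0)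
    (lift : ∀ {W : 𝒜} (k : W ⟶ B), k ≫ g = 0 → {l : W ⟶ A // l ≫ f = k}) :
    HasShortExact A B C :=
  ⟨f, g, w, .mk' (ShortComplex.exact_of_f_is_kernel _ (KernelFork.IsLimit.ofι' f w lift))
    inferInstance inferInstance⟩

lemma pullback_of_shortExact {f : A ⟶ B} {g : B ⟶ C} {w : f ≫ g = 0}
    (h : (ShortComplex.mk f g w).ShortExact) (q : Q ⟶ C) : HasShortExact A (pullback g q) Q := by
  have : Mono f := h.mono_f
  have : Epi g := h.epi_g
  let ι : A ⟶ pullback g q := pullback.lift f 0 (by rw [w, zero_comp])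
  have hι : ι ≫ pullback.fst g q = f := pullback.lift_fst _ _ _
  have hι' : ι ≫ pullback.snd g q = 0 := pullback.lift_snd _ _ _
  have : Mono ι := mono_of_mono_fac hι
  refine of_forall_lift hι' fun k hk => ?_
  have hk' : (k ≫ pullback.fst g q) ≫ g = 0 := by
    rw [Category.assoc, pullback.condition, reassoc_of% hk, zero_comp]
  refine ⟨h.exact.lift _ hk', pullback.hom_ext ?_ ?_⟩
  · rw [Category.assoc, hι]
    exact h.exact.lift_f _ hk'
  · rw [Category.assoc, hι', comp_zero, hk]

lemma exists_pullback (h₁ : HasShortExact A B C) (h₂ : HasShortExact K Q C) :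
    ∃ X, HasShortExact A X Q ∧ HasShortExact K X B := by
  obtain ⟨f, g, w, h₁⟩ := h₁
  obtain ⟨j, q, w', h₂⟩ := h₂
  exact ⟨pullback g q, pullback_of_shortExact h₁ q,
    (pullback_of_shortExact h₂ g).of_iso_middle (pullbackSymmetry q g)⟩

/-- The middle term is the preimage in `I` of the subobject `C` of the quotient `H` of `I`. -/
lemma exists_preimage (h₁ : HasShortExact K I H) (h₂ : HasShortExact C H L) :
    ∃ X, HasShortExact K X C ∧ HasShortExact X I L := by
  obtain ⟨j, q, w, h₁⟩ := h₁
  obtain ⟨φ, ψ, w', h₂⟩ := h₂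
  have : Epi q := h₁.epi_g
  have : Mono φ := h₂.mono_f
  have : Epi ψ := h₂.epi_g
  have hw : pullback.fst q φ ≫ q ≫ ψ = 0 := by rw [pullback.condition_assoc, w', comp_zero]
  refine ⟨pullback q φ, pullback_of_shortExact h₁ φ, of_forall_lift hw fun k hk => ?_⟩
  rw [← Category.assoc] at hk
  exact ⟨pullback.lift k (h₂.exact.lift _ hk) (h₂.exact.lift_f _ hk).symm, pullback.lift_fst _ _ _⟩

lemma injective_middle (h : HasShortExact A B C) (hA : Injective A) (hC : Injective C) :
    Injective B := by
  obtain ⟨f, g, w, h⟩ := h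
  have : Injective (ShortComplex.mk f g w).X₁ := hA
  exact .of_iso h.splittingOfInjective.isoBinaryBiproduct.symm inferInstance

end HasShortExact

section Ext

variable [HasExt.{w} 𝒜]

lemma exists_lift_of_subsingleton_ext {S : ShortComplex 𝒜} (hS : S.ShortExact) {W : 𝒜}
    (hW : Subsingleton (Abelian.Ext W S.X₁ 1)) (k : W ⟶ S.X₃) : ∃ l : W ⟶ S.X₂, l ≫ S.g = k := by
  obtain ⟨y, hy⟩ := Abelian.Ext.covariant_sequence_exact₃ W hS (Abelian.Ext.mk₀ k)
    (zero_add 1) (hW.elim _ _)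
  obtain ⟨l, rfl⟩ := (Abelian.Ext.mk₀_bijective _ _).2 y
  rw [Abelian.Ext.mk₀_comp_mk₀] at hy
  exact ⟨l, (Abelian.Ext.mk₀_bijective _ _).1 hy⟩

lemma subsingleton_ext_of_forall_exists_lift {S : ShortComplex 𝒜} (hS : S.ShortExact) {W : 𝒜}
    (hW : Subsingleton (Abelian.Ext W S.X₂ 1))
    (lift : ∀ k : W ⟶ S.X₃, ∃ l : W ⟶ S.X₂, l ≫ S.g = k) :
    Subsingleton (Abelian.Ext W S.X₁ 1) := by
  refine subsingleton_of_forall_eq 0 fun x => ?_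
  obtain ⟨y, rfl⟩ := Abelian.Ext.covariant_sequence_exact₁ W hS x (hW.elim _ _) (zero_add 1)
  obtain ⟨k, rfl⟩ := (Abelian.Ext.mk₀_bijective _ _).2 y
  obtain ⟨l, rfl⟩ := lift k
  rw [← Abelian.Ext.mk₀_comp_mk₀, Abelian.Ext.comp_assoc_of_second_deg_zero, hS.comp_extClass,
    Abelian.Ext.comp_zero]

/-- `Ext^i(W, X) = 0` for all `i > n` and all `W` in the test class `𝒯`. -/
def ExtVanishesAbove (𝒯 : ObjectProperty 𝒜) (n : ℕ) : ObjectProperty 𝒜 :=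
  fun X => ∀ ⦃W⦄, 𝒯 W → ∀ i, n < i → Subsingleton (Abelian.Ext W X i)

namespace HasShortExact

variable {A A' B C C' I J : 𝒜}

lemma swap (h : HasShortExact A B C) (hCA : Subsingleton (Abelian.Ext C A 1)) :
    HasShortExact C B A := by
  obtain ⟨f, g, w, h⟩ := h
  obtain ⟨s, hs⟩ := exists_lift_of_subsingleton_ext h hCA (𝟙 C)
  have := h.mono_f
  let σ := ShortComplex.Splitting.ofExactOfSection _ h.exact s hs this
  let τ : (ShortComplex.mk σ.s σ.r σ.s_r).Splitting :=
    { r := g, s := f, f_r := σ.s_g, s_g := σ.f_r, id := by rw [add_comm]; exact σ.id }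
  exact ⟨σ.s, σ.r, σ.s_r, τ.shortExact⟩

lemma horseshoe (h : HasShortExact A B C) (hA : HasShortExact A' I A) (hC : HasShortExact C' J C)
    (hJA : Subsingleton (Abelian.Ext J A 1)) :
    ∃ B' Z, HasShortExact J Z I ∧ HasShortExact A' B' C' ∧ HasShortExact B' Z B := by
  obtain ⟨X, hAXJ, hCXB⟩ := h.exists_pullback hC
  obtain ⟨Z, hJZI, hAZX⟩ := (hAXJ.swap hJA).exists_pullback hA
  obtain ⟨B', hB', hBZB⟩ := hAZX.exists_preimage hCXB
  exact ⟨B', Z, hJZI, hB', hBZB⟩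

variable {𝒯 : ObjectProperty 𝒜} {n : ℕ}

lemma subsingleton_ext_left {W : 𝒜} {i : ℕ} (h : HasShortExact A B C)
    (hB : Subsingleton (Abelian.Ext W B (i + 1))) (hC : Subsingleton (Abelian.Ext W C i)) :
    Subsingleton (Abelian.Ext W A (i + 1)) := by
  obtain ⟨f, g, w, h⟩ := h
  refine subsingleton_of_forall_eq 0 fun x => ?_
  obtain ⟨y, rfl⟩ := Abelian.Ext.covariant_sequence_exact₁ W h x (hB.elim _ _) rfl
  rw [hC.elim y 0, Abelian.Ext.zero_comp]

lemma extVanishesAbove_left (h : HasShortExact A B C) (hB : ExtVanishesAbove 𝒯 n B)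
    (hC : ExtVanishesAbove 𝒯 n C) : ExtVanishesAbove 𝒯 (n + 1) A := by
  intro W hW i hi
  obtain ⟨i, rfl⟩ := Nat.exists_eq_add_one_of_ne_zero (by lia : i ≠ 0)
  exact h.subsingleton_ext_left (hB hW (i + 1) (by lia)) (hC hW i (by lia))

lemma extVanishesAbove_middle (h : HasShortExact A B C) (hA : ExtVanishesAbove 𝒯 n A)
    (hC : ExtVanishesAbove 𝒯 n C) : ExtVanishesAbove 𝒯 n B := by
  obtain ⟨f, g, w, h⟩ := h
  refine fun W hW i hi => subsingleton_of_forall_eq 0 fun x => ?_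
  obtain ⟨y, rfl⟩ := Abelian.Ext.covariant_sequence_exact₂ W h x ((hC hW i hi).elim _ _)
  rw [(hA hW i hi).elim y 0, Abelian.Ext.zero_comp]

lemma extVanishesAbove_right (h : HasShortExact A B C) (hA : ExtVanishesAbove 𝒯 (n + 1) A)
    (hB : ExtVanishesAbove 𝒯 n B) : ExtVanishesAbove 𝒯 n C := by
  obtain ⟨f, g, w, h⟩ := h
  refine fun W hW i hi => subsingleton_of_forall_eq 0 fun x => ?_
  have := hA hW (i + 1) (by lia)
  obtain ⟨y, rfl⟩ := Abelian.Ext.covariant_sequence_exact₃ W h x rfl (this.elim _ _)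
  rw [(hB hW i hi).elim y 0, Abelian.Ext.zero_comp]

end HasShortExact

namespace ExtVanishesAbove

variable {𝒯 𝒮 : ObjectProperty 𝒜} {m n : ℕ} {X : 𝒜}

lemma of_injective (hX : Injective X) : ExtVanishesAbove 𝒯 n X := by
  intro W _ i hi
  obtain ⟨i, rfl⟩ := Nat.exists_eq_add_one_of_ne_zero (by lia : i ≠ 0)
  exact Abelian.Ext.subsingleton_of_injective W X i

lemma mono (h : ExtVanishesAbove 𝒯 m X) (hmn : m ≤ n) : ExtVanishesAbove 𝒯 n X :=
  fun _ hW i hi => h hW i (hmn.trans_lt hi)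

lemma anti (h : ExtVanishesAbove 𝒯 n X) (h𝒮 : 𝒮 ≤ 𝒯) : ExtVanishesAbove 𝒮 n X :=
  fun _ hW i hi => h (h𝒮 _ hW) i hi

end ExtVanishesAbove

/-- Coinductive form of Gorenstein injectivity relative to the test class `𝒯`: `M` belongs to a
class of objects without higher `Ext` from `𝒯`, each of which is a quotient of an injective object
by an object of that class. -/
def AcyclicallyResolved (𝒯 : ObjectProperty 𝒜) : ObjectProperty 𝒜 := fun M =>
  ∃ P : ObjectProperty 𝒜, P M ∧ ∀ X, P X → ExtVanishesAbove 𝒯 0 X ∧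
    ∃ X' I, Injective I ∧ HasShortExact X' I X ∧ P X'

namespace AcyclicallyResolved

variable {𝒯 : ObjectProperty 𝒜} {A B C M G : 𝒜}

lemma extVanishesAbove (h : AcyclicallyResolved 𝒯 M) : ExtVanishesAbove 𝒯 0 M := by
  obtain ⟨P, hM, hP⟩ := h
  exact (hP M hM).1

lemma exists_syzygy (h : AcyclicallyResolved 𝒯 M) :
    ∃ X I, Injective I ∧ HasShortExact X I M ∧ AcyclicallyResolved 𝒯 X := by
  obtain ⟨P, hM, hP⟩ := h
  obtain ⟨X, I, hI, hS, hX⟩ := (hP M hM).2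
  exact ⟨X, I, hI, hS, P, hX, hP⟩

lemma of_syzygy (hA : AcyclicallyResolved 𝒯 A) (hB : Injective B) (h : HasShortExact A B C) :
    AcyclicallyResolved 𝒯 C := by
  refine ⟨fun X => X = C ∨ AcyclicallyResolved 𝒯 X, .inl rfl, ?_⟩
  rintro X (rfl | hX)
  · exact ⟨h.extVanishesAbove_right (hA.extVanishesAbove.mono zero_le_one) (.of_injective hB),
      A, B, hB, h, .inr hA⟩
  · obtain ⟨Y, I, hI, hS, hY⟩ := hX.exists_syzygy
    exact ⟨hX.extVanishesAbove, Y, I, hI, hS, .inr hY⟩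

lemma of_injective (hM : Injective M) : AcyclicallyResolved 𝒯 M :=
  ⟨isInjective 𝒜, hM, fun X hX => ⟨.of_injective hX, 0, X, hX,
    .of_isZero_left (isZero_zero 𝒜) (.refl X), Injective.zero_injective⟩⟩

instance : (AcyclicallyResolved 𝒯).IsClosedUnderIsomorphisms where
  of_iso e h := by
    obtain ⟨X, I, hI, hS, hX⟩ := h.exists_syzygy
    exact hX.of_syzygy hI (hS.of_iso_right e)

instance : (AcyclicallyResolved 𝒯).ContainsZero where
  exists_zero := ⟨0, isZero_zero 𝒜, of_injective Injective.zero_injective⟩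

lemma extension (h𝒯 : isInjective 𝒜 ≤ 𝒯) (hA : AcyclicallyResolved 𝒯 A)
    (hC : AcyclicallyResolved 𝒯 C) (h : HasShortExact A B C) : AcyclicallyResolved 𝒯 B := by
  refine ⟨fun Y => ∃ X Z, HasShortExact X Y Z ∧ AcyclicallyResolved 𝒯 X ∧ AcyclicallyResolved 𝒯 Z,
    ⟨A, C, h, hA, hC⟩, ?_⟩
  rintro Y ⟨X, Z, h, hX, hZ⟩
  obtain ⟨X', I, hI, hSX, hX'⟩ := hX.exists_syzygy
  obtain ⟨Z', J, hJ, hSZ, hZ'⟩ := hZ.exists_syzygy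
  obtain ⟨Y', E, hE, hY', hSY⟩ :=
    h.horseshoe hSX hSZ (hX.extVanishesAbove (h𝒯 J hJ) 1 one_pos)
  exact ⟨h.extVanishesAbove_middle hX.extVanishesAbove hZ.extVanishesAbove,
    Y', E, hE.injective_middle hJ hI, hSY, X', Z', hY', hX', hZ'⟩

lemma cokernel (h𝒯 : isInjective 𝒜 ≤ 𝒯) (hA : AcyclicallyResolved 𝒯 A)
    (hB : AcyclicallyResolved 𝒯 B) (h : HasShortExact A B C) : AcyclicallyResolved 𝒯 C := by
  obtain ⟨B', I, hI, hS, hB'⟩ := hB.exists_syzygy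
  obtain ⟨K, hBKA, hKIC⟩ := hS.exists_preimage h
  exact (extension h𝒯 hB' hA hBKA).of_syzygy hI hKIC

lemma kernel (h𝒯 : isInjective 𝒜 ≤ 𝒯) (hG : AcyclicallyResolved 𝒯 G)
    (hC : AcyclicallyResolved 𝒯 C) (h : HasShortExact M G C)
    (hM : ExtVanishesAbove (isInjective 𝒜) 0 M) : AcyclicallyResolved 𝒯 M := by
  obtain ⟨K, I, hI, hKIC, hK⟩ := hC.exists_syzygy
  obtain ⟨X, hMXI, hKXG⟩ := h.exists_pullback hKIC
  exact cokernel h𝒯 (of_injective hI) (extension h𝒯 hK hG hKXG)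
    (hMXI.swap (hM hI 1 one_pos))

lemma exists_cosyzygy [EnoughInjectives 𝒜] (h : AcyclicallyResolved 𝒯 M) :
    ∃ I X, Injective I ∧ HasShortExact M I X ∧ AcyclicallyResolved 𝒯 X :=
  ⟨Injective.under M, _, inferInstance, .of_mono (Injective.ι M),
    h.of_syzygy inferInstance (.of_mono (Injective.ι M))⟩

end AcyclicallyResolved

end Ext

/-- `M` has a coresolution `0 → M → G⁰ → ⋯ → Gⁿ → 0` by objects of the class `𝒞`, built one short
exact sequence at a time. -/
def HasCoresolution (𝒞 : ObjectProperty 𝒜) : ℕ → ObjectProperty 𝒜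
  | 0, M => 𝒞 M
  | n + 1, M => ∃ G Y, 𝒞 G ∧ HasShortExact M G Y ∧ HasCoresolution 𝒞 n Y

namespace HasCoresolution

variable {𝒞 𝒮 𝒯 : ObjectProperty 𝒜} {M : 𝒜} {m n : ℕ}

lemma succ [𝒞.ContainsZero] [𝒞.IsClosedUnderIsomorphisms] (h : HasCoresolution 𝒞 n M) :
    HasCoresolution 𝒞 (n + 1) M := by
  induction n generalizing M with
  | zero => exact ⟨M, 0, h, .of_isZero_right (isZero_zero 𝒜) (.refl M), 𝒞.prop_zero⟩
  | succ n ih =>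
    obtain ⟨G, Y, hG, hS, hY⟩ := h
    exact ⟨G, Y, hG, hS, ih hY⟩

variable [HasExt.{w} 𝒜]

lemma extVanishesAbove (h𝒞 : 𝒞 ≤ ExtVanishesAbove 𝒯 0) (h : HasCoresolution 𝒞 n M) :
    ExtVanishesAbove 𝒯 n M := by
  induction n generalizing M with
  | zero => exact h𝒞 M h
  | succ n ih =>
    obtain ⟨G, Y, hG, hS, hY⟩ := h
    exact hS.extVanishesAbove_left ((h𝒞 G hG).mono n.zero_le) (ih hY)

lemma acyclicallyResolved (h𝒯 : isInjective 𝒜 ≤ 𝒯)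
    (h : HasCoresolution (AcyclicallyResolved 𝒯) m M)
    (hM : ExtVanishesAbove (isInjective 𝒜) 0 M) : AcyclicallyResolved 𝒯 M := by
  induction m generalizing M with
  | zero => exact h
  | succ m ih =>
    obtain ⟨G, C, hG, hS, hC⟩ := h
    have hC' : AcyclicallyResolved 𝒯 C := ih hC <|
      hS.extVanishesAbove_right (hM.mono zero_le_one) (hG.extVanishesAbove.anti h𝒯)
    exact .kernel h𝒯 hG hC' hS hM

lemma of_extVanishesAbove (h𝒯 : isInjective 𝒜 ≤ 𝒯)
    (h : HasCoresolution (AcyclicallyResolved 𝒯) m M)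
    (hM : ExtVanishesAbove (isInjective 𝒜) n M) : HasCoresolution (AcyclicallyResolved 𝒯) n M := by
  induction n generalizing m M with
  | zero => exact h.acyclicallyResolved h𝒯 hM
  | succ n ih =>
    obtain ⟨G, Y, hG, hS, hY⟩ := h.succ
    exact ⟨G, Y, hG, hS, ih hY <|
      hS.extVanishesAbove_right hM ((hG.extVanishesAbove.anti h𝒯).mono n.zero_le)⟩

lemma of_hasCoresolution (h𝒮 : isInjective 𝒜 ≤ 𝒮) (h𝒯 : isInjective 𝒜 ≤ 𝒯)
    (hm : HasCoresolution (AcyclicallyResolved 𝒯) m M)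
    (hn : HasCoresolution (AcyclicallyResolved 𝒮) n M) :
    HasCoresolution (AcyclicallyResolved 𝒯) n M :=
  hm.of_extVanishesAbove h𝒯 <|
    hn.extVanishesAbove fun _ hX => hX.extVanishesAbove.anti h𝒮

end HasCoresolution

end AbelianCategory

lemma exists_int_chain {α : Type*} {r : α → α → Prop} (hsucc : ∀ a, ∃ b, r a b)
    (hpred : ∀ a, ∃ b, r b a) (a : α) (k : ℤ) :
    ∃ K : ℤ → α, K k = a ∧ ∀ n, r (K n) (K (n + 1)) := by
  choose s hs using hsucc
  choose p hp using hpred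
  let K₀ : ℤ → α
    | .ofNat n => s^[n] a
    | .negSucc n => p^[n + 1] a
  have hK₀ : ∀ n, r (K₀ n) (K₀ (n + 1))
    | .ofNat n => by
      change r (s^[n] a) (s^[n + 1] a)
      rw [Function.iterate_succ_apply']
      exact hs _
    | .negSucc 0 => hp a
    | .negSucc (n + 1) => by
      change r (p^[n + 2] a) (p^[n + 1] a)
      rw [Function.iterate_succ_apply']
      exact hp _
  refine ⟨fun n => K₀ (n - k), congrArg K₀ (sub_self k), fun n => ?_⟩
  simpa only [add_sub_right_comm] using hK₀ (n - k)

lemma exact_comp_comp {α β γ δ ε : Type*} [Zero δ] [Zero ε] {p : α → β} {i : β → γ} {q : γ → δ}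
    {j : δ → ε} (hp : Function.Surjective p) (h : Function.Exact i q) (hj : Function.Injective j)
    (hj₀ : j 0 = 0) : Function.Exact (i ∘ p) (j ∘ q) := fun x => by
  rw [Function.comp_apply, hj.eq_iff' hj₀, h x, hp.range_comp]

lemma exact_linearMap_comp {S A B C W : Type*} [Ring S] [AddCommGroup A] [AddCommGroup B]
    [AddCommGroup C] [AddCommGroup W] [Module S A] [Module S B] [Module S C] [Module S W]
    {f : A →ₗ[S] B} {g : B →ₗ[S] C} (hf : Function.Injective f) (h : Function.Exact f g) :
    Function.Exact (fun l : W →ₗ[S] A => f ∘ₗ l) (fun l : W →ₗ[S] B => g ∘ₗ l) := by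
  refine fun k => ⟨fun hk => ?_, ?_⟩
  · let l := k.codRestrict (LinearMap.range f) fun x => (h _).1 (LinearMap.congr_fun hk x)
    refine ⟨(LinearEquiv.ofInjective f hf).symm.toLinearMap ∘ₗ l, LinearMap.ext fun x => ?_⟩
    exact LinearEquiv.ofInjective_symm_apply f (h := hf) (l x)
  · rintro ⟨l, rfl⟩
    change g ∘ₗ f ∘ₗ l = 0
    rw [← LinearMap.comp_assoc, h.linearMap_comp_eq_zero, LinearMap.zero_comp]

lemma isZero_Ext_succ_of_injective (k : Type*) [Ring k] {𝒜 : Type*} [Category* 𝒜] [Abelian 𝒜]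
    [Linear k 𝒜] [EnoughProjectives 𝒜] (X Y : 𝒜) [Injective Y] (n : ℕ) :
    Limits.IsZero (((Ext k 𝒜 (n + 1)).obj (.op X)).obj Y) := by
  let P := projectiveResolution X
  have hP := P.complex_exactAt_succ n
  rw [HomologicalComplex.exactAt_iff' _ (n + 2) (n + 1) n (by simp) (by simp)] at hP
  refine .of_iso ?_ (P.isoExt (R := k) (n + 1) Y)
  rw [← HomologicalComplex.exactAt_iff_isZero_homology,
    HomologicalComplex.exactAt_iff' _ n (n + 1) (n + 2) (by simp) (by simp),
    ShortComplex.moduleCat_exact_iff]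
  exact fun x hx => ⟨hP.descToInjective x hx, hP.comp_descToInjective x hx⟩

section Modules

variable {R} {A B C M W : ModuleCat.{u} R}

lemma shortExact_of_shortExactSeq {f : A →ₗ[R] B} {g : B →ₗ[R] C} (h : ShortExactSeq R A B C f g) :
    (ShortComplex.mk (ModuleCat.ofHom f) (ModuleCat.ofHom g)
      (ModuleCat.hom_ext h.2.2.linearMap_comp_eq_zero)).ShortExact :=
  ModuleCat.shortComplex_shortExact _ h.2.2 h.1 h.2.1

lemma hasShortExact_iff : HasShortExact A B C ↔ ∃ f g, ShortExactSeq R A B C f g := by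
  constructor
  · rintro ⟨f, g, w, h⟩
    exact ⟨f.hom, g.hom, h.moduleCat_injective_f, h.moduleCat_surjective_g,
      (ShortComplex.ShortExact.moduleCat_exact_iff_function_exact _).1 h.exact⟩
  · rintro ⟨f, g, h⟩
    exact ⟨_, _, _, shortExact_of_shortExactSeq h⟩

lemma surjective_comp_of_shortExactSeq {f : A →ₗ[R] B} {g : B →ₗ[R] C}
    (h : ShortExactSeq R A B C f g) (hW : Subsingleton (Abelian.Ext W A 1)) :
    Function.Surjective (fun l : W →ₗ[R] B => g ∘ₗ l) := fun k => by
  obtain ⟨l, hl⟩ := exists_lift_of_subsingleton_ext (shortExact_of_shortExactSeq h) hW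
    (ModuleCat.ofHom k)
  exact ⟨l.hom, congrArg ModuleCat.Hom.hom hl⟩

lemma shortExactSeq_ker_of_exact {ι : A →ₗ[R] B} {f : B →ₗ[R] C} {g : C →ₗ[R] M}
    (hι : Function.Injective ι) (hιf : Function.Exact ι f) (hfg : Function.Exact f g) :
    ShortExactSeq R A B (.of R (LinearMap.ker g)) ι
      (f.codRestrict (LinearMap.ker g) fun x => hfg.apply_apply_eq_zero x) := by
  refine ⟨hι, fun ⟨y, hy⟩ => ?_, fun x => ?_⟩
  · obtain ⟨x, rfl⟩ := (hfg y).1 hy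
    exact ⟨x, rfl⟩
  · rw [← hιf x]
    exact Subtype.ext_iff

section TotallyAcyclic

variable {𝒮 𝒯 : ModuleCat.{u} R → Prop} {I : ℤ → ModuleCat.{u} R} {d : ∀ n, I n →ₗ[R] I (n + 1)}

lemma shortExactSeq_cycles (h : IsTotallyAcyclicInjComplex R 𝒯 I d) (n : ℤ) :
    ShortExactSeq R (.of R (LinearMap.ker (d n))) (I n) (.of R (LinearMap.ker (d (n + 1))))
      (LinearMap.ker (d n)).subtype
      ((d n).codRestrict _ fun x => (h.2.1 n).apply_apply_eq_zero x) :=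
  shortExactSeq_ker_of_exact Subtype.val_injective (LinearMap.exact_subtype_ker_map _) (h.2.1 n)

lemma injective_term (h : IsTotallyAcyclicInjComplex R 𝒯 I d) (n : ℤ) : Injective (I n) :=
  (Module.injective_iff_injective_object R (I n)).1 (h.1 n)

lemma extVanishesAbove_cycles (h : IsTotallyAcyclicInjComplex R 𝒯 I d) (n : ℤ) :
    ExtVanishesAbove 𝒯 0 (ModuleCat.of R (LinearMap.ker (d n))) := by
  intro W hW i hi
  have := injective_term h
  induction i, hi using Nat.le_induction generalizing n with
  | base =>
    refine subsingleton_ext_of_forall_exists_lift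
      (shortExact_of_shortExactSeq (shortExactSeq_cycles h n))
      (Abelian.Ext.subsingleton_of_injective W (I n) 0) fun k => ?_
    obtain ⟨l, hl⟩ := (h.2.2 W hW n (Submodule.subtype _ ∘ₗ k.hom)).1
      (LinearMap.ext fun x => (k.hom x).2)
    exact ⟨ModuleCat.ofHom l, ModuleCat.hom_ext <| LinearMap.ext fun x =>
      Subtype.ext (LinearMap.congr_fun hl x)⟩
  | succ i _ ih =>
    exact (hasShortExact_iff.2 ⟨_, _, shortExactSeq_cycles h n⟩).subsingleton_ext_left
      (Abelian.Ext.subsingleton_of_injective W (I n) i) (ih (n + 1))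

lemma acyclicallyResolved_cycles (h : IsTotallyAcyclicInjComplex R 𝒯 I d) (n : ℤ) :
    AcyclicallyResolved 𝒯 (ModuleCat.of R (LinearMap.ker (d n))) := by
  refine ⟨fun X => ∃ m, X = .of R (LinearMap.ker (d m)), ⟨n, rfl⟩, ?_⟩
  rintro _ ⟨m, rfl⟩
  obtain ⟨m, rfl⟩ : ∃ l, m = l + 1 := ⟨m - 1, by ring⟩
  exact ⟨extVanishesAbove_cycles h _, _, I m, injective_term h m,
    hasShortExact_iff.2 ⟨_, _, shortExactSeq_cycles h m⟩, m, rfl⟩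

lemma acyclicallyResolved_of_gorensteinRelInjective (h : GorensteinRelInjective R 𝒯 M) :
    AcyclicallyResolved 𝒯 M := by
  obtain ⟨I, d, π, h, hπ, hdπ⟩ := h
  have hker : LinearMap.ker (d 0) = LinearMap.ker π :=
    (h.2.1 (-1)).linearMap_ker_eq.trans hdπ.linearMap_ker_eq.symm
  have hS : ShortExactSeq R (.of R (LinearMap.ker (d 0))) (I 0) M (Submodule.subtype _) π :=
    ⟨Subtype.val_injective, hπ, hker ▸ LinearMap.exact_subtype_ker_map π⟩
  exact (acyclicallyResolved_cycles h 0).of_syzygy (injective_term h 0)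
    (hasShortExact_iff.2 ⟨_, _, hS⟩)

lemma isTotallyAcyclicInjComplex_splice {K I : ℤ → ModuleCat.{u} R} {f : ∀ n, K n →ₗ[R] I n}
    {g : ∀ n, I n →ₗ[R] K (n + 1)} (hI : ∀ n, Injective (I n))
    (hS : ∀ n, ShortExactSeq R (K n) (I n) (K (n + 1)) (f n) (g n))
    (hK : ∀ n, ExtVanishesAbove 𝒯 0 (K n)) :
    IsTotallyAcyclicInjComplex R 𝒯 I fun n => f (n + 1) ∘ₗ g n := by
  refine ⟨fun n => (Module.injective_iff_injective_object R (I n)).2 (hI n), fun n => ?_,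
    fun W hW n => ?_⟩
  · exact exact_comp_comp (p := g n) (q := g (n + 1)) (hS n).2.1 (hS (n + 1)).2.2
      (hS (n + 1 + 1)).1 (map_zero (f (n + 1 + 1)))
  · exact exact_comp_comp (surjective_comp_of_shortExactSeq (hS n) (hK n hW 1 one_pos))
      (exact_linearMap_comp (hS (n + 1)).1 (hS (n + 1)).2.2)
      (fun _ _ => (LinearMap.cancel_left (hS (n + 1 + 1)).1).1) (LinearMap.comp_zero _)

lemma gorensteinRelInjective_of_acyclicallyResolved (h : AcyclicallyResolved 𝒯 M) :
    GorensteinRelInjective R 𝒯 M := by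
  obtain ⟨K, hK, hS⟩ := exists_int_chain
    (α := {X : ModuleCat.{u} R // AcyclicallyResolved 𝒯 X})
    (r := fun X Y => ∃ I, Injective I ∧ HasShortExact X.1 I Y.1)
    (fun X => by obtain ⟨I, Y, hI, hS, hY⟩ := X.2.exists_cosyzygy; exact ⟨⟨Y, hY⟩, I, hI, hS⟩)
    (fun X => by obtain ⟨Y, I, hI, hS, hY⟩ := X.2.exists_syzygy; exact ⟨⟨Y, hY⟩, I, hI, hS⟩)
    ⟨M, h⟩ 1
  obtain rfl : (K 1).1 = M := congrArg Subtype.val hK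
  simp only [hasShortExact_iff] at hS
  choose I hI f g hS using hS
  exact ⟨I, _, g 0,
    isTotallyAcyclicInjComplex_splice hI hS fun n => (K n).2.extVanishesAbove,
    (hS 0).2.1, (hS (-1)).2.1.comp_exact_iff_exact.2 (hS 0).2.2⟩

lemma gorensteinRelInjective_eq_acyclicallyResolved :
    GorensteinRelInjective R 𝒯 = AcyclicallyResolved 𝒯 :=
  funext fun _ => propext
    ⟨acyclicallyResolved_of_gorensteinRelInjective, gorensteinRelInjective_of_acyclicallyResolved⟩

lemma gorensteinRelInjective_anti (h𝒮 : ∀ W, 𝒮 W → 𝒯 W) (h : GorensteinRelInjective R 𝒯 M) :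
    GorensteinRelInjective R 𝒮 M := by
  obtain ⟨I, d, π, ⟨hI, hd, hW⟩, hπ⟩ := h
  exact ⟨I, d, π, ⟨hI, hd, fun W h => hW W (h𝒮 W h)⟩, hπ⟩

end TotallyAcyclic

section Coresolution

variable {𝒞 : ObjectProperty (ModuleCat.{u} R)} {n : ℕ}

lemma hasCoresolution_of_isFiniteCoresolution [𝒞.IsClosedUnderIsomorphisms]
    {G : ℕ → ModuleCat.{u} R} {d : ∀ i, G i →ₗ[R] G (i + 1)} {ε : M →ₗ[R] G 0}
    (h : IsFiniteCoresolution R M n G d ε) (hG : ∀ i, 𝒞 (G i)) : HasCoresolution 𝒞 n M := by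
  obtain ⟨hε, hd₀, hd, hn⟩ := h
  induction n generalizing M G with
  | zero =>
    have hε' : Function.Surjective ε := fun x => (hd₀ x).1 (hn 1 one_pos _)
    exact 𝒞.prop_of_iso (LinearEquiv.ofBijective ε ⟨hε, hε'⟩).symm.toModuleIso (hG 0)
  | succ n ih =>
    exact ⟨G 0, _, hG 0, hasShortExact_iff.2 ⟨_, _, shortExactSeq_ker_of_exact hε hd₀ (hd 0)⟩,
      ih (fun i => hG (i + 1)) Subtype.val_injective (LinearMap.exact_subtype_ker_map _)
        (fun i => hd (i + 1)) fun i hi => hn (i + 1) (by lia)⟩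

lemma isFiniteCoresolution_zero {G : ℕ → ModuleCat.{u} R} (ε : M ≃ₗ[R] G 0)
    (hG : ∀ i, 0 < i → Subsingleton (G i)) :
    IsFiniteCoresolution R M 0 G (fun _ => 0) ε.toLinearMap := by
  refine ⟨ε.injective, ?_, fun i => ?_, fun i hi x => (hG i hi).elim x 0⟩
  · exact fun x => ⟨fun _ => ε.surjective x, fun _ => rfl⟩
  · exact fun x => ⟨fun _ => ⟨0, (hG (i + 1) i.succ_pos).elim _ _⟩, fun _ => rfl⟩

lemma exists_isFiniteCoresolution [𝒞.ContainsZero] [𝒞.IsClosedUnderIsomorphisms]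
    (h : HasCoresolution 𝒞 n M) :
    ∃ (G : ℕ → ModuleCat.{u} R) (d : ∀ i, G i →ₗ[R] G (i + 1)) (ε : M →ₗ[R] G 0),
      IsFiniteCoresolution R M n G d ε ∧ ∀ i, 𝒞 (G i) := by
  induction n generalizing M with
  | zero =>
    let G : ℕ → ModuleCat.{u} R
      | 0 => M
      | _ + 1 => .of R PUnit
    refine ⟨G, _, _, isFiniteCoresolution_zero (.refl R M) ?_, ?_⟩
    · rintro (_ | i) hi
      exacts [absurd hi (lt_irrefl 0), inferInstanceAs (Subsingleton PUnit)]
    · rintro (_ | i)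
      exacts [h, 𝒞.prop_of_isZero (ModuleCat.isZero_of_subsingleton (.of R PUnit))]
  | succ n ih =>
    obtain ⟨G₀, Y, hG₀, hS, hY⟩ := h
    obtain ⟨f, g, hS⟩ := hasShortExact_iff.1 hS
    obtain ⟨G, d, ε, ⟨hε, hd₀, hd, hn⟩, hG⟩ := ih hY
    let G' : ℕ → ModuleCat.{u} R
      | 0 => G₀
      | i + 1 => G i
    let d' : ∀ i, G' i →ₗ[R] G' (i + 1)
      | 0 => ε ∘ₗ g
      | i + 1 => d i
    refine ⟨G', d', f, ⟨hS.1, hε.comp_exact_iff_exact.2 hS.2.2, ?_, ?_⟩, ?_⟩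
    · rintro (_ | i)
      exacts [hS.2.1.comp_exact_iff_exact.2 hd₀, hd i]
    · rintro (_ | i) hi
      exacts [absurd hi (Nat.not_lt_zero _), hn i (by lia)]
    · rintro (_ | i)
      exacts [hG₀, hG i]

end Coresolution

lemma weakInjective_of_injective (hM : Module.Injective R M) : WeakInjective R M := fun N _ =>
  have : Injective M := (Module.injective_iff_injective_object R M).1 hM
  ModuleCat.subsingleton_of_isZero (isZero_Ext_succ_of_injective ℤ N M 0)

/-- The module `M` has a coresolution of length `n` by modules which are Gorenstein injective
relative to the test class `𝒯`; this specializes to `GidLE` and `GwidLE`. -/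
def GorensteinRelInjDimLE (𝒯 : ModuleCat.{u} R → Prop) (M : ModuleCat.{u} R) (n : ℕ) : Prop :=
  ∃ (G : ℕ → ModuleCat.{u} R) (d : ∀ i, G i →ₗ[R] G (i + 1)) (ε : M →ₗ[R] G 0),
    IsFiniteCoresolution R M n G d ε ∧ ∀ i, GorensteinRelInjective R 𝒯 (G i)

/-- The Gorenstein injective dimension relative to the test class `𝒯`; this specializes to `Gid`
and `Gwid`. -/
noncomputable def GorensteinRelInjDim (𝒯 : ModuleCat.{u} R → Prop) (M : ModuleCat.{u} R) : ℕ∞ :=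
  sInf {c : ℕ∞ | ∃ n : ℕ, c = n ∧ GorensteinRelInjDimLE 𝒯 M n}

variable {𝒮 𝒯 : ModuleCat.{u} R → Prop} {m n : ℕ}

lemma gorensteinRelInjDimLE_iff :
    GorensteinRelInjDimLE 𝒯 M n ↔ HasCoresolution (AcyclicallyResolved 𝒯) n M := by
  unfold GorensteinRelInjDimLE
  rw [gorensteinRelInjective_eq_acyclicallyResolved]
  exact ⟨fun ⟨_, _, _, h, hG⟩ => hasCoresolution_of_isFiniteCoresolution h hG,
    exists_isFiniteCoresolution⟩

lemma gorensteinRelInjDimLE_anti (h𝒮 : ∀ W, 𝒮 W → 𝒯 W) (h : GorensteinRelInjDimLE 𝒯 M n) :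
    GorensteinRelInjDimLE 𝒮 M n := by
  obtain ⟨G, d, ε, h, hG⟩ := h
  exact ⟨G, d, ε, h, fun i => gorensteinRelInjective_anti h𝒮 (hG i)⟩

lemma gorensteinRelInjDimLE_of_finite (h𝒮 : ∀ E : ModuleCat.{u} R, Module.Injective R E → 𝒮 E)
    (h𝒯 : ∀ E : ModuleCat.{u} R, Module.Injective R E → 𝒯 E) (hm : GorensteinRelInjDimLE 𝒯 M m)
    (hn : GorensteinRelInjDimLE 𝒮 M n) : GorensteinRelInjDimLE 𝒯 M n := by
  rw [gorensteinRelInjDimLE_iff] at hm hn ⊢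
  exact hm.of_hasCoresolution
    (fun E hE => h𝒮 E ((Module.injective_iff_injective_object R E).2 hE))
    (fun E hE => h𝒯 E ((Module.injective_iff_injective_object R E).2 hE)) hn

lemma exists_gorensteinRelInjDimLE (h : GorensteinRelInjDim 𝒯 M ≠ ⊤) :
    ∃ n, GorensteinRelInjDimLE 𝒯 M n := by
  contrapose! h
  exact sInf_eq_top.2 fun _ ⟨n, _, hn⟩ => (h n hn).elim

end Modules

end RelativeGorenstein

open RelativeGorenstein in
theorem gid_le_gwid_general {𝒮 𝒯 : ModuleCat.{u} R → Prop}
    (h𝒮 : ∀ E : ModuleCat.{u} R, Module.Injective R E → 𝒮 E) (h𝒮𝒯 : ∀ W, 𝒮 W → 𝒯 W)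
    (M : ModuleCat.{u} R) :
    GorensteinRelInjDim 𝒮 M ≤ GorensteinRelInjDim 𝒯 M ∧
      (GorensteinRelInjDim 𝒯 M ≠ ⊤ → GorensteinRelInjDim 𝒮 M = GorensteinRelInjDim 𝒯 M) := by
  have hle : GorensteinRelInjDim 𝒮 M ≤ GorensteinRelInjDim 𝒯 M :=
    sInf_le_sInf fun _ ⟨n, hc, hn⟩ => ⟨n, hc, gorensteinRelInjDimLE_anti h𝒮𝒯 hn⟩
  refine ⟨hle, fun hfin => hle.antisymm ?_⟩
  obtain ⟨m, hm⟩ := exists_gorensteinRelInjDimLE hfin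
  exact sInf_le_sInf fun _ ⟨n, hc, hn⟩ =>
    ⟨n, hc, gorensteinRelInjDimLE_of_finite h𝒮 (fun E hE => h𝒮𝒯 E (h𝒮 E hE)) hm hn⟩

/-- `Gid_R M ≤ Gwid_R M`, with equality when `Gwid_R M < ∞`. -/
theorem gid_le_gwid (M : ModuleCat.{u} R) :
    Gid R M ≤ Gwid R M ∧ (Gwid R M ≠ ⊤ → Gid R M = Gwid R M) :=
  gid_le_gwid_general R (fun _ hE => hE) (fun _ => RelativeGorenstein.weakInjective_of_injective) M
end

section
/- Suppose the left global Gorenstein weak injective dimension of R is finite. Then ℓ.GwiD(R) ≤ n if and only if every weak injective R-module has projective dimension at most n, if and only if every R-module of finite weak injective dimension has projective dimension at most n. -/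
open CategoryTheory

universe u

variable (R : Type u) [Ring R]

/-!
By dimension shifting, Gorenstein injectivity relative to `𝒯` is coinductive: it defines the largest
class of modules `M` with `Ext^i(W, M) = 0` for `W` in `𝒯` and `i > 0` that are cosyzygies of
members of the class. If `𝒯` contains all injectives, coinduction shows that the class is closed
under extensions, and under those kernels of epimorphisms whose positive `Ext^i(W, -)` vanish for
`W` in `𝒯`. Any module with this vanishing and of finite relative Gorenstein injective dimension
therefore lies in the class. Once all these dimensions are finite, the dimension of `M` is at most
`n` exactly when `Ext^i(W, M) = 0` for all `W` in `𝒯` and `i > n`, and requiring this of every `M`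
bounds the projective dimension of each `W` by `n`. For the second equivalence, a module is embedded
in an injective module, which is weak injective, and the cokernel has smaller weak injective
dimension.
-/

section

variable {R} {A B C : ModuleCat.{u} R} {f : A →ₗ[R] B} {g : B →ₗ[R] C}

lemma shortExactSeq_ker (hg : Function.Surjective g) :
    ShortExactSeq R (.of R (LinearMap.ker g)) B C (LinearMap.ker g).subtype g :=
  ⟨Subtype.val_injective, hg, LinearMap.exact_subtype_ker_map g⟩

lemma shortExactSeq_mkQ (hf : Function.Injective f) :
    ShortExactSeq R A B (.of R (B ⧸ LinearMap.range f)) f (LinearMap.range f).mkQ :=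
  ⟨hf, Submodule.mkQ_surjective _, LinearMap.exact_map_mkQ_range f⟩

lemma shortExactSeq_range (h : Function.Exact f g) :
    ShortExactSeq R (.of R (LinearMap.range f)) B (.of R (LinearMap.range g))
      (LinearMap.range f).subtype g.rangeRestrict :=
  ⟨Subtype.val_injective, g.surjective_rangeRestrict, h.linearMap_rangeRestrict⟩

lemma exists_shortExactSeq_projective (M : ModuleCat.{u} R) :
    ∃ (K P : ModuleCat.{u} R) (f : K →ₗ[R] P) (g : P →ₗ[R] M),
      Module.Projective R P ∧ ShortExactSeq R K P M f g :=
  ⟨_, Projective.over M, _, (Projective.π M).hom,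
    (IsProjective.iff_projective _).2 (Projective.projective_over M),
    shortExactSeq_ker ((ModuleCat.epi_iff_surjective _).1 inferInstance)⟩

lemma injective_prod {I J : Type u} [AddCommGroup I] [Module R I] [AddCommGroup J]
    [Module R J] (hI : Module.Injective R I) (hJ : Module.Injective R J) :
    Module.Injective R (I × J) where
  out X Y _ _ _ _ f hf g := by
    obtain ⟨a, ha⟩ := hI.out f hf ((LinearMap.fst R I J).comp g)
    obtain ⟨b, hb⟩ := hJ.out f hf ((LinearMap.snd R I J).comp g)
    exact ⟨a.prod b, fun x => Prod.ext (ha x) (hb x)⟩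

/-- `C` is a (first) cosyzygy of `A`: the cokernel of an embedding of `A` into an injective
module. Exact complexes of injectives are handled as chains of modules linked by this relation. -/
def IsCosyzygy (A C : ModuleCat.{u} R) : Prop :=
  ∃ (I : ModuleCat.{u} R) (f : A →ₗ[R] I) (g : I →ₗ[R] C),
    Module.Injective R I ∧ ShortExactSeq R A I C f g

lemma exists_isCosyzygy (M : ModuleCat.{u} R) : ∃ C, IsCosyzygy M C :=
  ⟨_, Injective.under M, (Injective.ι M).hom, _,
    (Module.injective_iff_injective_object R _).2 (Injective.injective_under M),
    shortExactSeq_mkQ ((ModuleCat.mono_iff_injective _).1 inferInstance)⟩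

namespace ShortExactSeq

lemma shortExact (h : ShortExactSeq R A B C f g) :
    (ShortComplex.mk (C := ModuleCat.{u} R) (X₁ := A) (X₂ := B) (X₃ := C)
      (ModuleCat.ofHom f) (ModuleCat.ofHom g)
      (ModuleCat.hom_ext h.2.2.linearMap_comp_eq_zero)).ShortExact where
  exact := (ShortComplex.ShortExact.moduleCat_exact_iff_function_exact _).2 h.2.2
  mono_f := (ModuleCat.mono_iff_injective _).2 h.1
  epi_g := (ModuleCat.epi_iff_surjective _).2 h.2.1

lemma exists_factor (h : ShortExactSeq R A B C f g) {X : Type*} [AddCommGroup X] [Module R X]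
    {φ : X →ₗ[R] B} (hφ : g ∘ₗ φ = 0) : ∃ ψ : X →ₗ[R] A, f ∘ₗ ψ = φ :=
  ⟨(LinearEquiv.ofInjective f h.1).symm ∘ₗ φ.codRestrict (LinearMap.range f) fun x =>
    (h.2.2 _).1 (LinearMap.congr_fun hφ x),
    LinearMap.ext fun _ => LinearEquiv.ofInjective_symm_apply f (h := h.1) _⟩

lemma injective_left_of_section (h : ShortExactSeq R A B C f g) (hB : Module.Injective R B)
    (hg : ∃ s : C →ₗ[R] B, g.comp s = .id) : Module.Injective R A where
  out X Y _ _ _ _ i hi φ := by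
    obtain ⟨r, hr⟩ := ((h.2.2.split_tfae h.1 h.2.1).out 0 1).1 hg
    obtain ⟨ψ, hψ⟩ := hB.out i hi (f.comp φ)
    exact ⟨r.comp ψ, fun x => by simpa [hψ] using LinearMap.congr_fun hr (φ x)⟩

lemma exists_pullback (h : ShortExactSeq R A B C f g) {L J : ModuleCat.{u} R} {k : L →ₗ[R] J}
    {p : J →ₗ[R] C} (h' : ShortExactSeq R L J C k p) :
    ∃ (D : ModuleCat.{u} R) (i : A →ₗ[R] D) (q : D →ₗ[R] J) (j : L →ₗ[R] D) (r : D →ₗ[R] B),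
      ShortExactSeq R A D J i q ∧ ShortExactSeq R L D B j r := by
  have hfg := h.2.2.apply_apply_eq_zero
  have hkp := h'.2.2.apply_apply_eq_zero
  let D : Submodule R (B × J) := LinearMap.eqLocus (g ∘ₗ .fst R B J) (p ∘ₗ .snd R B J)
  refine ⟨.of R D, (LinearMap.inl R B J ∘ₗ f).codRestrict D fun a => ?_, .snd R B J ∘ₗ D.subtype,
    (LinearMap.inr R B J ∘ₗ k).codRestrict D fun l => ?_, .fst R B J ∘ₗ D.subtype,
    ⟨fun a a' haa => h.1 (congrArg (·.1.1) haa), fun y => ?_, ?_⟩,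
    ⟨fun l l' hll => h'.1 (congrArg (·.1.2) hll), fun b => ?_, ?_⟩⟩
  · simp [D, hfg]
  · simp [D, hkp]
  · obtain ⟨b, hb⟩ := h.2.1 (p y)
    exact ⟨⟨(b, y), hb⟩, rfl⟩
  · rintro ⟨⟨b, y⟩, hby⟩
    refine ⟨fun (hy : y = 0) => ?_, ?_⟩
    · obtain ⟨a, rfl⟩ := (h.2.2 b).1 (by simpa [D, hy] using hby)
      exact ⟨a, Subtype.ext (Prod.ext rfl hy.symm)⟩
    · rintro ⟨a, ha⟩
      exact (congrArg (·.1.2) ha).symm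
  · obtain ⟨y, hy⟩ := h'.2.1 (g b)
    exact ⟨⟨(b, y), hy.symm⟩, rfl⟩
  · rintro ⟨⟨b, y⟩, hby⟩
    refine ⟨fun (hb : b = 0) => ?_, ?_⟩
    · obtain ⟨l, rfl⟩ := (h'.2.2 y).1 (by simpa [D, hb, eq_comm] using hby)
      exact ⟨l, Subtype.ext (Prod.ext hb.symm rfl)⟩
    · rintro ⟨l, hl⟩
      exact (congrArg (·.1.1) hl).symm

lemma exists_preimage (h : ShortExactSeq R A B C f g) {K E : ModuleCat.{u} R} {k : K →ₗ[R] E}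
    {e : E →ₗ[R] B} (h' : ShortExactSeq R K E B k e) :
    ∃ (X : ModuleCat.{u} R) (i : K →ₗ[R] X) (q : X →ₗ[R] A) (j : X →ₗ[R] E),
      ShortExactSeq R K X A i q ∧ ShortExactSeq R X E C j (g ∘ₗ e) := by
  have hX := shortExactSeq_ker (g := g ∘ₗ e) (h.2.1.comp h'.2.1)
  obtain ⟨i, hi⟩ := hX.exists_factor (φ := k) (by
    rw [LinearMap.comp_assoc, h'.2.2.linearMap_comp_eq_zero, LinearMap.comp_zero])
  obtain ⟨q, hq⟩ := h.exists_factor (φ := e ∘ₗ (LinearMap.ker (g ∘ₗ e)).subtype)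
    hX.2.2.linearMap_comp_eq_zero
  replace hi (x : K) : (i x).1 = k x := LinearMap.congr_fun hi x
  replace hq (x : LinearMap.ker (g ∘ₗ e)) : f (q x) = e x := LinearMap.congr_fun hq x
  refine ⟨_, i, q, _, ⟨fun x x' hxx => h'.1 ?_, fun a => ?_, fun x => ?_⟩, hX⟩
  · rw [← hi, hxx, hi]
  · obtain ⟨y, hy⟩ := h'.2.1 (f a)
    refine ⟨⟨y, ?_⟩, h.1 ?_⟩
    · simp [hy, h.2.2.apply_apply_eq_zero]
    · rw [hq, hy]
  · rw [← map_eq_zero_iff f h.1, hq, h'.2.2]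
    simp [Subtype.ext_iff, hi]

lemma prod_of_section (h : ShortExactSeq R A B C f g) {s : C →ₗ[R] B} (hs : g ∘ₗ s = .id)
    {K J : ModuleCat.{u} R} {k : K →ₗ[R] J} {p : J →ₗ[R] A} (h' : ShortExactSeq R K J A k p) :
    ShortExactSeq R K (.of R (J × C)) B (.inl R J C ∘ₗ k) ((f ∘ₗ p).coprod s) := by
  have hgs (c : C) : g (s c) = c := LinearMap.congr_fun hs c
  have hgf := h.2.2.apply_apply_eq_zero
  refine ⟨LinearMap.inl_injective.comp h'.1, fun b => ?_, fun ⟨j, c⟩ => ⟨fun hjc => ?_, ?_⟩⟩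
  · obtain ⟨a, ha⟩ := (h.2.2 (b - s (g b))).1 (by simp [hgs])
    obtain ⟨j, rfl⟩ := h'.2.1 a
    exact ⟨(j, g b), by simp [ha]⟩
  · obtain rfl : c = 0 := by simpa [hgs, hgf] using congrArg g hjc
    obtain ⟨x, rfl⟩ := (h'.2.2 j).1 (h.1 (by simpa using hjc))
    exact ⟨x, rfl⟩
  · rintro ⟨x, hx⟩
    obtain ⟨rfl, rfl⟩ := Prod.ext_iff.1 hx
    simp [h'.2.2.apply_apply_eq_zero]

end ShortExactSeq

section Ext

open Abelian

variable {W : ModuleCat.{u} R} {i : ℕ}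

lemma subsingleton_ext_of_injective {I : ModuleCat.{u} R} (hI : Module.Injective R I)
    (W : ModuleCat.{u} R) (i : ℕ) : Subsingleton (Ext W I (i + 1)) :=
  have : Injective I := (Module.injective_iff_injective_object R I).1 hI
  Ext.subsingleton_of_injective W I i

namespace ShortExactSeq

lemma exists_lift_of_ext (h : ShortExactSeq R A B C f g) (hA : Subsingleton (Ext W A 1))
    (φ : W →ₗ[R] C) : ∃ ψ : W →ₗ[R] B, g ∘ₗ ψ = φ := by
  obtain ⟨x, hx⟩ := Ext.covariant_sequence_exact₃ W h.shortExact
    (Ext.mk₀ (ModuleCat.ofHom φ : W ⟶ C)) (zero_add 1) (hA.elim _ _)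
  obtain ⟨x, rfl⟩ := (Ext.mk₀_bijective W B).2 x
  rw [Ext.mk₀_comp_mk₀] at hx
  exact ⟨x.hom, congrArg ModuleCat.Hom.hom ((Ext.mk₀_bijective W C).1 hx)⟩

lemma subsingleton_ext_one_left (h : ShortExactSeq R A B C f g) (hB : Subsingleton (Ext W B 1))
    (lift : ∀ φ : W →ₗ[R] C, ∃ ψ : W →ₗ[R] B, g ∘ₗ ψ = φ) : Subsingleton (Ext W A 1) := by
  refine subsingleton_of_forall_eq 0 fun x => ?_
  obtain ⟨y, rfl⟩ := Ext.covariant_sequence_exact₁ W h.shortExact x (hB.elim _ _) (zero_add 1)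
  obtain ⟨y, rfl⟩ := (Ext.mk₀_bijective W C).2 y
  obtain ⟨ψ, hψ⟩ := lift y.hom
  obtain rfl : (ModuleCat.ofHom ψ : W ⟶ B) ≫ (ModuleCat.ofHom g : B ⟶ C) = y :=
    ModuleCat.hom_ext hψ
  have hgδ := h.shortExact.comp_extClass
  dsimp only at hgδ
  rw [← Ext.mk₀_comp_mk₀, Ext.comp_assoc_of_second_deg_zero, hgδ, Ext.comp_zero]

lemma subsingleton_ext_left (h : ShortExactSeq R A B C f g)
    (hB : Subsingleton (Ext W B (i + 1))) (hC : Subsingleton (Ext W C i)) :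
    Subsingleton (Ext W A (i + 1)) := by
  refine subsingleton_of_forall_eq 0 fun x => ?_
  obtain ⟨y, rfl⟩ := Ext.covariant_sequence_exact₁ W h.shortExact x (hB.elim _ _) rfl
  rw [hC.elim y 0, Ext.zero_comp]

lemma subsingleton_ext_middle (h : ShortExactSeq R A B C f g)
    (hA : Subsingleton (Ext W A i)) (hC : Subsingleton (Ext W C i)) :
    Subsingleton (Ext W B i) := by
  refine subsingleton_of_forall_eq 0 fun x => ?_
  obtain ⟨y, rfl⟩ := Ext.covariant_sequence_exact₂ W h.shortExact x (hC.elim _ _)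
  rw [hA.elim y 0, Ext.zero_comp]

lemma subsingleton_ext_right (h : ShortExactSeq R A B C f g)
    (hB : Subsingleton (Ext W B i)) (hA : Subsingleton (Ext W A (i + 1))) :
    Subsingleton (Ext W C i) := by
  refine subsingleton_of_forall_eq 0 fun x => ?_
  obtain ⟨y, rfl⟩ := Ext.covariant_sequence_exact₃ W h.shortExact x rfl (hA.elim _ _)
  rw [hB.elim y 0, Ext.zero_comp]

end ShortExactSeq

lemma extVanish_succ_iff {N M : ModuleCat.{u} R} {n : ℕ} :
    ExtVanish R (n + 1) N M ↔ Subsingleton (Ext N M (n + 1)) := by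
  let P : ProjectiveResolution N := projectiveResolution N
  have hP : ExtVanish R (n + 1) N M ↔ ∀ f : P.complex.X (n + 1) ⟶ M,
      P.complex.d (n + 2) (n + 1) ≫ f = 0 → ∃ g, P.complex.d (n + 1) n ≫ g = f := by
    rw [ExtVanish, ← ModuleCat.isZero_iff_subsingleton (R := ℤ),
      (P.isoExt (R := ℤ) (n + 1) M).isZero_iff, ← HomologicalComplex.exactAt_iff_isZero_homology,
      HomologicalComplex.exactAt_iff' _ n (n + 1) (n + 2) (by simp) (by simp),
      ShortComplex.moduleCat_exact_iff]
    rfl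
  rw [hP]
  refine ⟨fun h => subsingleton_of_forall_eq 0 fun x => ?_, fun h f hf => ?_⟩
  · obtain ⟨f, hf, rfl⟩ := P.extMk_surjective x (n + 2) rfl
    exact (P.extMk_eq_zero_iff f (n + 2) rfl hf n rfl).2 (h f hf)
  · exact (P.extMk_eq_zero_iff f (n + 2) rfl hf n rfl).1 (h.elim _ _)

lemma weakInjective_of_injective {I : ModuleCat.{u} R} (hI : Module.Injective R I) :
    WeakInjective R I :=
  fun N _ => extVanish_succ_iff.2 (subsingleton_ext_of_injective hI N 0)

lemma IsCosyzygy.widLE (h : IsCosyzygy A C) {k : ℕ} (hA : WidLE R A (k + 1)) : WidLE R C k := by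
  obtain ⟨I, f, g, hI, hs⟩ := h
  exact fun N hN => extVanish_succ_iff.2 <| hs.subsingleton_ext_right
    (subsingleton_ext_of_injective hI N k) (extVanish_succ_iff.1 (hA N hN))

end Ext

section RelativeInjective

variable {𝒯 𝒳 : ModuleCat.{u} R → Prop} {M : ModuleCat.{u} R}

variable (𝒯) in
/-- `M` lies in the right `Ext`-orthogonal class of `𝒯`: `Ext^i(W, M) = 0` for all `W` in `𝒯` and
all `i > 0`. The cocycles of a `Hom(𝒯, -)`-exact exact complex of injectives lie in this class. -/
def RightExtOrthogonal (M : ModuleCat.{u} R) : Prop :=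
  ∀ W, 𝒯 W → ∀ i : ℕ, Subsingleton (Abelian.Ext W M (i + 1))

namespace RightExtOrthogonal

lemma of_injective {I : ModuleCat.{u} R} (hI : Module.Injective R I) : RightExtOrthogonal 𝒯 I :=
  fun W _ => subsingleton_ext_of_injective hI W

lemma middle (hA : RightExtOrthogonal 𝒯 A) (h : ShortExactSeq R A B C f g)
    (hC : RightExtOrthogonal 𝒯 C) : RightExtOrthogonal 𝒯 B :=
  fun W hW i => h.subsingleton_ext_middle (hA W hW i) (hC W hW i)

lemma right (hA : RightExtOrthogonal 𝒯 A) (h : ShortExactSeq R A B C f g)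
    (hB : RightExtOrthogonal 𝒯 B) : RightExtOrthogonal 𝒯 C :=
  fun W hW i => h.subsingleton_ext_right (hB W hW i) (hA W hW (i + 1))

lemma of_isCosyzygy (h : IsCosyzygy A C) (hA : RightExtOrthogonal 𝒯 A) :
    RightExtOrthogonal 𝒯 C := by
  obtain ⟨I, f, g, hI, hs⟩ := h
  exact hA.right hs (.of_injective hI)

lemma exists_lift (hA : RightExtOrthogonal 𝒯 A) (h : ShortExactSeq R A B C f g)
    {W : ModuleCat.{u} R} (hW : 𝒯 W) (φ : W →ₗ[R] C) : ∃ ψ : W →ₗ[R] B, g ∘ₗ ψ = φ :=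
  h.exists_lift_of_ext (hA W hW 0) φ

end RightExtOrthogonal

lemma exists_int_chain {α : Type*} {r : α → α → Prop} {p q : α → Prop} (hpq : ∀ a, p a → q a)
    (hleft : ∀ a, p a → ∃ b, p b ∧ r b a) (hright : ∀ a, q a → ∃ b, q b ∧ r a b) {a : α}
    (ha : p a) : ∃ z : ℤ → α, z 0 = a ∧ (∀ n, q (z n)) ∧ ∀ n, r (z n) (z (n + 1)) := by
  choose! l hlp hlr using hleft
  choose! s hsq hsr using hright
  have hl (n : ℕ) : p (l^[n] a) := by
    induction n with
    | zero => exact ha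
    | succ n ih => exact Function.iterate_succ_apply' l n a ▸ hlp _ ih
  have hs (n : ℕ) : q (s^[n] a) := by
    induction n with
    | zero => exact hpq a ha
    | succ n ih => exact Function.iterate_succ_apply' s n a ▸ hsq _ ih
  refine ⟨fun | .ofNat n => s^[n] a | .negSucc n => l^[n + 1] a, rfl, ?_, ?_⟩
  · rintro (n | n)
    exacts [hs n, hpq _ (hl (n + 1))]
  · rintro (n | _ | n)
    · change r (s^[n] a) (s^[n + 1] a)
      exact Function.iterate_succ_apply' s n a ▸ hsr _ (hs n)
    · exact hlr a ha
    · change r (l^[n + 2] a) (l^[n + 1] a)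
      exact Function.iterate_succ_apply' l (n + 1) a ▸ hlr _ (hl (n + 1))

lemma gorensteinRelInjective_of_forall_isCosyzygy {Z : ℤ → ModuleCat.{u} R}
    (hZ : ∀ n, RightExtOrthogonal 𝒯 (Z n)) (h : ∀ n, IsCosyzygy (Z n) (Z (n + 1))) :
    GorensteinRelInjective R 𝒯 (Z 1) := by
  choose I a b hI hs using h
  have exact_comp (n : ℤ) : Function.Exact (a (n + 1) ∘ₗ b n) (b (n + 1)) :=
    (hs n).2.1.comp_exact_iff_exact.2 (hs (n + 1)).2.2
  refine ⟨I, fun n => a (n + 1) ∘ₗ b n, b 0, ⟨hI, fun n => ?_, fun W hW n φ => ⟨fun hφ => ?_, ?_⟩⟩,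
    (hs 0).2.1, exact_comp (-1)⟩
  · exact (hs (n + 1 + 1)).1.comp_exact_iff_exact.2 (exact_comp n)
  · obtain ⟨ψ, rfl⟩ := (hs (n + 1)).exists_factor (LinearMap.ext fun x =>
      (hs (n + 1 + 1)).1 ((LinearMap.congr_fun hφ x).trans (map_zero _).symm))
    obtain ⟨θ, rfl⟩ := (hZ n).exists_lift (hs n) hW ψ
    exact ⟨θ, rfl⟩
  · rintro ⟨θ, rfl⟩
    ext x
    simp [(hs (n + 1)).2.2.apply_apply_eq_zero]

namespace GorensteinRelInjective

-- Iterating `h𝒳` builds the complex to the left of `M`; to the right, any injective resolution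
-- works, since cosyzygies of orthogonal modules are orthogonal.
lemma coinduct (h𝒳 : ∀ N, 𝒳 N → RightExtOrthogonal 𝒯 N ∧ ∃ K, 𝒳 K ∧ IsCosyzygy K N)
    (hM : 𝒳 M) : GorensteinRelInjective R 𝒯 M := by
  obtain ⟨Z, rfl, hZ, hs⟩ := exists_int_chain (r := IsCosyzygy) (q := RightExtOrthogonal 𝒯)
    (fun N hN => (h𝒳 N hN).1) (fun N hN => (h𝒳 N hN).2) (fun N hN => by
      obtain ⟨V, hV⟩ := _root_.exists_isCosyzygy N
      exact ⟨V, .of_isCosyzygy hV hN, hV⟩) hM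
  exact gorensteinRelInjective_of_forall_isCosyzygy (Z := fun n => Z (n - 1)) (fun n => hZ _)
    fun n => by simpa [add_sub_right_comm] using hs (n - 1)

end GorensteinRelInjective

namespace IsTotallyAcyclicInjComplex

variable {I : ℤ → ModuleCat.{u} R} {d : ∀ n : ℤ, I n →ₗ[R] I (n + 1)}

lemma isCosyzygy_range (h : IsTotallyAcyclicInjComplex R 𝒯 I d) (n : ℤ) :
    IsCosyzygy (.of R (LinearMap.range (d n))) (.of R (LinearMap.range (d (n + 1)))) :=
  ⟨_, _, _, h.1 (n + 1), shortExactSeq_range (h.2.1 n)⟩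

lemma isCosyzygy_coker (h : IsTotallyAcyclicInjComplex R 𝒯 I d) {π : I 0 →ₗ[R] M}
    (hπ : Function.Surjective π) (hdπ : Function.Exact (d (-1)) π) :
    IsCosyzygy (.of R (LinearMap.range (d (-1)))) M :=
  ⟨I 0, (LinearMap.range (d (-1))).subtype, π, h.1 0, Subtype.val_injective, hπ,
    fun x => (hdπ x).trans (by simp)⟩

lemma rightExtOrthogonal_range (h : IsTotallyAcyclicInjComplex R 𝒯 I d) (n : ℤ) :
    RightExtOrthogonal 𝒯 (.of R (LinearMap.range (d n))) := by
  intro W hW i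
  induction i generalizing n with
  | zero =>
    refine (shortExactSeq_range (h.2.1 n)).subsingleton_ext_one_left
      (subsingleton_ext_of_injective (h.1 (n + 1)) W 0) fun φ => ?_
    obtain ⟨ψ, hψ⟩ := (h.2.2 W hW (n + 1) ((LinearMap.range (d (n + 1))).subtype ∘ₗ φ)).1 <| by
      ext x
      obtain ⟨y, hy⟩ := (φ x).2
      exact (congrArg (d (n + 1 + 1)) hy.symm).trans ((h.2.1 (n + 1)).apply_apply_eq_zero y)
    exact ⟨ψ, LinearMap.ext fun x => Subtype.ext (LinearMap.congr_fun hψ x)⟩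
  | succ i ih =>
    exact (shortExactSeq_range (h.2.1 n)).subsingleton_ext_left
      (subsingleton_ext_of_injective (h.1 (n + 1)) W (i + 1)) (ih (n + 1))

lemma gorensteinRelInjective_range (h : IsTotallyAcyclicInjComplex R 𝒯 I d) (n : ℤ) :
    GorensteinRelInjective R 𝒯 (.of R (LinearMap.range (d n))) := by
  refine .coinduct (𝒳 := fun N => ∃ j, N = .of R (LinearMap.range (d j))) ?_ ⟨n, rfl⟩
  rintro _ ⟨j, rfl⟩
  obtain ⟨j, rfl⟩ : ∃ i, j = i + 1 := ⟨j - 1, by simp⟩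
  exact ⟨h.rightExtOrthogonal_range _, _, ⟨j, rfl⟩, h.isCosyzygy_range j⟩

end IsTotallyAcyclicInjComplex

namespace GorensteinRelInjective

lemma exists_isCosyzygy (hM : GorensteinRelInjective R 𝒯 M) :
    ∃ K, GorensteinRelInjective R 𝒯 K ∧ IsCosyzygy K M := by
  obtain ⟨I, d, π, h, hπ, hdπ⟩ := hM
  exact ⟨_, h.gorensteinRelInjective_range (-1), h.isCosyzygy_coker hπ hdπ⟩

lemma rightExtOrthogonal (hM : GorensteinRelInjective R 𝒯 M) : RightExtOrthogonal 𝒯 M := by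
  obtain ⟨I, d, π, h, hπ, hdπ⟩ := hM
  exact (h.rightExtOrthogonal_range (-1)).of_isCosyzygy (h.isCosyzygy_coker hπ hdπ)

lemma of_isCosyzygy (hM : RightExtOrthogonal 𝒯 M)
    (h : ∃ K, GorensteinRelInjective R 𝒯 K ∧ IsCosyzygy K M) : GorensteinRelInjective R 𝒯 M := by
  refine coinduct (𝒳 := fun N => RightExtOrthogonal 𝒯 N ∧
    ∃ K, GorensteinRelInjective R 𝒯 K ∧ IsCosyzygy K N) ?_ ⟨hM, h⟩
  rintro N ⟨hN, K, hK, hKN⟩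
  exact ⟨hN, K, ⟨hK.rightExtOrthogonal, hK.exists_isCosyzygy⟩, hKN⟩

lemma of_subsingleton (hM : Subsingleton M) : GorensteinRelInjective R 𝒯 M := by
  have hI (N : ModuleCat.{u} R) (hN : Subsingleton N) : Module.Injective R N :=
    ⟨fun _ _ _ _ _ _ _ _ _ => ⟨0, fun _ => Subsingleton.elim _ _⟩⟩
  refine coinduct (𝒳 := fun N => Subsingleton N) (fun N hN => ?_) hM
  refine ⟨.of_injective (hI N hN), N, hN, N, 0, 0, hI N hN, Function.injective_of_subsingleton _,
    fun x => ⟨0, Subsingleton.elim _ _⟩, fun x => ?_⟩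
  exact ⟨fun _ => ⟨0, Subsingleton.elim _ _⟩, fun _ => rfl⟩

lemma of_linearEquiv (hM : GorensteinRelInjective R 𝒯 M) {N : ModuleCat.{u} R} (e : M ≃ₗ[R] N) :
    GorensteinRelInjective R 𝒯 N := by
  obtain ⟨I, d, π, h, hπ, hdπ⟩ := hM
  exact ⟨I, d, e ∘ₗ π, h, e.surjective.comp hπ, e.injective.comp_exact_iff_exact.2 hdπ⟩

lemma middle (h𝒯 : ∀ I : ModuleCat.{u} R, Module.Injective R I → 𝒯 I)
    (h : ShortExactSeq R A B C f g) (hA : GorensteinRelInjective R 𝒯 A)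
    (hC : GorensteinRelInjective R 𝒯 C) : GorensteinRelInjective R 𝒯 B := by
  refine coinduct (𝒳 := fun N => ∃ (A C : ModuleCat.{u} R) (f : A →ₗ[R] N) (g : N →ₗ[R] C),
    GorensteinRelInjective R 𝒯 A ∧ GorensteinRelInjective R 𝒯 C ∧ ShortExactSeq R A N C f g)
    ?_ ⟨A, C, f, g, hA, hC, h⟩
  rintro B ⟨A, C, f, g, hA, hC, h⟩
  refine ⟨hA.rightExtOrthogonal.middle h hC.rightExtOrthogonal, ?_⟩
  -- Pulling `B → C` back along `I → C` gives an extension of `I` by `A`, which splits because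
  -- `I` belongs to `𝒯`; so `B` is a quotient of `J × I`.
  obtain ⟨K, hK, J, k, p, hJ, hKJA⟩ := hA.exists_isCosyzygy
  obtain ⟨L, hL, I, l, q, hI, hLIC⟩ := hC.exists_isCosyzygy
  obtain ⟨D, i, r, j, s, hADI, hLDB⟩ := h.exists_pullback hLIC
  obtain ⟨σ, hσ⟩ := hA.rightExtOrthogonal.exists_lift hADI (h𝒯 I hI) .id
  obtain ⟨X, a, b, c, hKXL, hXB⟩ := hLDB.exists_preimage (hADI.prod_of_section hσ hKJA)
  exact ⟨X, ⟨K, L, a, b, hK, hL, hKXL⟩, _, c, _, injective_prod hJ hI, hXB⟩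

lemma left_of_injective (h𝒯 : ∀ I : ModuleCat.{u} R, Module.Injective R I → 𝒯 I)
    (h : ShortExactSeq R A B C f g) (hA : RightExtOrthogonal 𝒯 A)
    (hB : GorensteinRelInjective R 𝒯 B) (hC : Module.Injective R C) :
    GorensteinRelInjective R 𝒯 A := by
  obtain ⟨K, hK, E, k, e, hE, hKEB⟩ := hB.exists_isCosyzygy
  obtain ⟨X, i, q, j, hKXA, hXEC⟩ := h.exists_preimage hKEB
  -- `Ext^1(C, X) = 0` as `C` belongs to `𝒯`, so `0 → X → E → C → 0` splits and `X` is injective.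
  have hX : RightExtOrthogonal 𝒯 X := hK.rightExtOrthogonal.middle hKXA hA
  exact .of_isCosyzygy hA ⟨K, hK, X, i, q,
    hXEC.injective_left_of_section hE (hX.exists_lift hXEC (h𝒯 C hC) .id), hKXA⟩

lemma left (h𝒯 : ∀ I : ModuleCat.{u} R, Module.Injective R I → 𝒯 I)
    (h : ShortExactSeq R A B C f g) (hA : RightExtOrthogonal 𝒯 A)
    (hB : GorensteinRelInjective R 𝒯 B) (hC : GorensteinRelInjective R 𝒯 C) :
    GorensteinRelInjective R 𝒯 A := by
  obtain ⟨L, hL, J, l, p, hJ, hLJC⟩ := hC.exists_isCosyzygy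
  obtain ⟨D, i, q, j, r, hADJ, hLDB⟩ := h.exists_pullback hLJC
  exact left_of_injective h𝒯 hADJ hA (middle h𝒯 hLDB hL hB) hJ

end GorensteinRelInjective

end RelativeInjective

section Dimension

variable {𝒯 𝒳 : ModuleCat.{u} R → Prop} {M : ModuleCat.{u} R} {n : ℕ}

/-- `M` has a coresolution of length `n` by modules in the class `𝒳`, so that `GwidLE R M n` is
`CoresolutionDimLE (GorensteinWeakInjective R) M n`. -/
def CoresolutionDimLE (𝒳 : ModuleCat.{u} R → Prop) (M : ModuleCat.{u} R) (n : ℕ) : Prop :=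
  ∃ (G : ℕ → ModuleCat.{u} R) (d : ∀ i, G i →ₗ[R] G (i + 1)) (ε : M →ₗ[R] G 0),
    IsFiniteCoresolution R M n G d ε ∧ ∀ i, 𝒳 (G i)

lemma coresolutionDimLE_zero_iff
    (equiv : ∀ {A B : ModuleCat.{u} R}, 𝒳 A → (A ≃ₗ[R] B) → 𝒳 B)
    (zero : ∀ {A : ModuleCat.{u} R}, Subsingleton A → 𝒳 A) :
    CoresolutionDimLE 𝒳 M 0 ↔ 𝒳 M := by
  refine ⟨fun ⟨G, d, ε, ⟨hε, hεd, _, hG⟩, h𝒳⟩ => ?_, fun hM => ?_⟩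
  · refine equiv (h𝒳 0) (LinearEquiv.ofBijective ε ⟨hε, fun x => ?_⟩).symm
    exact (hεd x).1 (hG 1 one_pos _)
  · let G : ℕ → ModuleCat.{u} R := fun
      | 0 => M
      | _ + 1 => .of R PUnit
    have hG (i : ℕ) : Subsingleton (G (i + 1)) := inferInstanceAs (Subsingleton PUnit)
    refine ⟨G, fun _ => 0, .id, ⟨Function.injective_id, fun x => ?_, fun i x => ?_, ?_⟩, ?_⟩
    · simp
    · exact iff_of_true rfl ⟨0, Subsingleton.elim _ _⟩
    · rintro (_ | i) hi x
      · lia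
      · exact Subsingleton.elim _ _
    · rintro (_ | i)
      exacts [hM, zero (hG i)]

lemma coresolutionDimLE_succ_iff :
    CoresolutionDimLE 𝒳 M (n + 1) ↔ ∃ (G V : ModuleCat.{u} R) (f : M →ₗ[R] G) (g : G →ₗ[R] V),
      𝒳 G ∧ ShortExactSeq R M G V f g ∧ CoresolutionDimLE 𝒳 V n := by
  refine ⟨fun ⟨G, d, ε, ⟨hε, hεd, hd, hG⟩, h𝒳⟩ => ?_, fun ⟨G, V, f, g, hG, hs, hV⟩ => ?_⟩
  · refine ⟨G 0, .of R (LinearMap.range (d 0)), ε, (d 0).rangeRestrict, h𝒳 0,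
      ⟨hε, (d 0).surjective_rangeRestrict, fun x => ?_⟩, fun i => G (i + 1), fun i => d (i + 1),
      (LinearMap.range (d 0)).subtype, ⟨Subtype.val_injective, fun x => ?_, fun i => hd (i + 1),
        fun i hi => hG (i + 1) (by lia)⟩, fun i => h𝒳 (i + 1)⟩
    · exact Subtype.ext_iff.trans (hεd x)
    · exact (hd 0 x).trans (by simp)
  · obtain ⟨T, d, ε, ⟨hε, hεd, hd, hT⟩, h𝒳⟩ := hV
    let T' : ℕ → ModuleCat.{u} R := fun
      | 0 => G
      | i + 1 => T i
    let d' : ∀ i, T' i →ₗ[R] T' (i + 1) := fun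
      | 0 => ε ∘ₗ g
      | i + 1 => d i
    refine ⟨T', d', f, ⟨hs.1, hε.comp_exact_iff_exact.2 hs.2.2, ?_, ?_⟩, ?_⟩
    · rintro (_ | i)
      exacts [hs.2.1.comp_exact_iff_exact.2 hεd, hd i]
    · rintro (_ | i) hi
      · lia
      · exact hT i (by lia)
    · rintro (_ | i)
      exacts [hG, h𝒳 i]

lemma coresolutionDimLE_gorensteinRelInjective_zero_iff :
    CoresolutionDimLE (GorensteinRelInjective R 𝒯) M 0 ↔ GorensteinRelInjective R 𝒯 M :=
  coresolutionDimLE_zero_iff (fun hA e => hA.of_linearEquiv e) .of_subsingleton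

lemma CoresolutionDimLE.subsingleton_ext (h : CoresolutionDimLE (GorensteinRelInjective R 𝒯) M n)
    {W : ModuleCat.{u} R} (hW : 𝒯 W) : Subsingleton (Abelian.Ext W M (n + 1)) := by
  induction n generalizing M with
  | zero =>
    exact (coresolutionDimLE_gorensteinRelInjective_zero_iff.1 h).rightExtOrthogonal W hW 0
  | succ n ih =>
    obtain ⟨G, V, f, g, hG, hs, hV⟩ := coresolutionDimLE_succ_iff.1 h
    exact hs.subsingleton_ext_left (hG.rightExtOrthogonal W hW _) (ih hV)

lemma RightExtOrthogonal.gorensteinRelInjective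
    (h𝒯 : ∀ I : ModuleCat.{u} R, Module.Injective R I → 𝒯 I) (hM : RightExtOrthogonal 𝒯 M)
    (h : CoresolutionDimLE (GorensteinRelInjective R 𝒯) M n) : GorensteinRelInjective R 𝒯 M := by
  induction n generalizing M with
  | zero => exact coresolutionDimLE_gorensteinRelInjective_zero_iff.1 h
  | succ n ih =>
    obtain ⟨G, V, f, g, hG, hs, hV⟩ := coresolutionDimLE_succ_iff.1 h
    exact .left h𝒯 hs hM hG (ih (hM.right hs hG.rightExtOrthogonal) hV)

lemma coresolutionDimLE_of_subsingleton_ext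
    (h : ∀ N, RightExtOrthogonal 𝒯 N → GorensteinRelInjective R 𝒯 N)
    (hM : ∀ W, 𝒯 W → ∀ i, n ≤ i → Subsingleton (Abelian.Ext W M (i + 1))) :
    CoresolutionDimLE (GorensteinRelInjective R 𝒯) M n := by
  induction n generalizing M with
  | zero =>
    exact coresolutionDimLE_gorensteinRelInjective_zero_iff.2
      (h M fun W hW i => hM W hW i i.zero_le)
  | succ n ih =>
    obtain ⟨V, I, f, g, hI, hs⟩ := exists_isCosyzygy M
    refine coresolutionDimLE_succ_iff.2 ⟨I, V, f, g, h I (.of_injective hI), hs, ih fun W hW i hi =>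
      hs.subsingleton_ext_right (subsingleton_ext_of_injective hI W i) (hM W hW (i + 1) (by lia))⟩

theorem forall_coresolutionDimLE_gorensteinRelInjective_iff
    (h𝒯 : ∀ I : ModuleCat.{u} R, Module.Injective R I → 𝒯 I)
    (h : ∀ M, ∃ m, CoresolutionDimLE (GorensteinRelInjective R 𝒯) M m) :
    (∀ M, CoresolutionDimLE (GorensteinRelInjective R 𝒯) M n) ↔
      ∀ W, 𝒯 W → HasProjectiveDimensionLE W n := by
  refine ⟨fun hn W hW => ?_, fun hn M => ?_⟩
  · exact hasProjectiveDimensionLT_of_enoughInjectives W (n + 1) fun M => (hn M).subsingleton_ext hW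
  · refine coresolutionDimLE_of_subsingleton_ext (fun N hN => ?_) fun W hW i hi => ?_
    · exact hN.gorensteinRelInjective h𝒯 (h N).choose_spec
    · have := hn W hW
      exact HasProjectiveDimensionLT.subsingleton W (n + 1) (i + 1) (by lia) M

lemma pdLE_zero_iff : PdLE R M 0 ↔ Module.Projective R M := by
  refine ⟨fun ⟨P, d, ε, ⟨hε, hdε, _, hP⟩, hproj⟩ => ?_, fun hM => ?_⟩
  · have hε' : Function.Injective ε := (injective_iff_map_eq_zero ε).2 fun x hx => by
      obtain ⟨y, rfl⟩ := (hdε x).1 hx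
      rw [hP 1 one_pos y, map_zero]
    have := hproj 0
    exact .of_equiv (LinearEquiv.ofBijective ε ⟨hε', hε⟩)
  · let P : ℕ → ModuleCat.{u} R := fun
      | 0 => M
      | _ + 1 => .of R PUnit
    have hP (i : ℕ) : Subsingleton (P (i + 1)) := inferInstanceAs (Subsingleton PUnit)
    refine ⟨P, fun _ => 0, .id, ⟨Function.surjective_id, fun x => ?_, fun i x => ?_, ?_⟩, ?_⟩
    · simp [eq_comm]
    · exact iff_of_true rfl ⟨0, Subsingleton.elim _ _⟩
    · rintro (_ | i) hi x
      · lia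
      · exact Subsingleton.elim _ _
    · rintro (_ | i)
      · exact hM
      · have := hP i
        exact .of_free

lemma pdLE_succ_iff :
    PdLE R M (n + 1) ↔ ∃ (K P : ModuleCat.{u} R) (f : K →ₗ[R] P) (g : P →ₗ[R] M),
      Module.Projective R P ∧ ShortExactSeq R K P M f g ∧ PdLE R K n := by
  refine ⟨fun ⟨P, d, ε, ⟨hε, hdε, hd, hP⟩, hproj⟩ => ?_, fun ⟨K, Q, f, g, hQ, hs, hK⟩ => ?_⟩
  · refine ⟨_, P 0, _, ε, hproj 0, shortExactSeq_ker hε, fun i => P (i + 1), fun i => d (i + 1),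
      (d 0).codRestrict (LinearMap.ker ε) hdε.apply_apply_eq_zero, ⟨fun ⟨y, hy⟩ => ?_, fun x => ?_,
        fun i => hd (i + 1), fun i hi => hP (i + 1) (by lia)⟩, fun i => hproj (i + 1)⟩
    · obtain ⟨x, rfl⟩ := (hdε y).1 hy
      exact ⟨x, rfl⟩
    · exact Subtype.ext_iff.trans (hd 0 x)
  · obtain ⟨T, d, ε, ⟨hε, hdε, hd, hT⟩, hproj⟩ := hK
    let T' : ℕ → ModuleCat.{u} R := fun
      | 0 => Q
      | i + 1 => T i
    let d' : ∀ i, T' (i + 1) →ₗ[R] T' i := fun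
      | 0 => f ∘ₗ ε
      | i + 1 => d i
    refine ⟨T', d', g, ⟨hs.2.1, hε.comp_exact_iff_exact.2 hs.2.2, ?_, ?_⟩, ?_⟩
    · rintro (_ | i)
      exacts [hs.1.comp_exact_iff_exact.2 hdε, hd i]
    · rintro (_ | i) hi
      · lia
      · exact hT i (by lia)
    · rintro (_ | i)
      exacts [hQ, hproj i]

lemma pdLE_iff_hasProjectiveDimensionLE : PdLE R M n ↔ HasProjectiveDimensionLE M n := by
  induction n generalizing M with
  | zero =>
    rw [pdLE_zero_iff, IsProjective.iff_projective]
    exact projective_iff_hasProjectiveDimensionLE_zero M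
  | succ n ih =>
    have step {K P : ModuleCat.{u} R} {f : K →ₗ[R] P} {g : P →ₗ[R] M} (hP : Module.Projective R P)
        (hs : ShortExactSeq R K P M f g) :
        HasProjectiveDimensionLE M (n + 1) ↔ HasProjectiveDimensionLE K n :=
      hs.shortExact.hasProjectiveDimensionLT_X₃_iff n ((IsProjective.iff_projective _).1 hP)
    rw [pdLE_succ_iff]
    refine ⟨fun ⟨K, P, f, g, hP, hs, hK⟩ => (step hP hs).2 (ih.1 hK), fun h => ?_⟩
    obtain ⟨K, P, f, g, hP, hs⟩ := exists_shortExactSeq_projective M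
    exact ⟨K, P, f, g, hP, hs, ih.2 ((step hP hs).1 h)⟩

lemma hasProjectiveDimensionLE_of_widLE
    (h : ∀ W, WeakInjective R W → HasProjectiveDimensionLE W n) {k : ℕ} (hM : WidLE R M k) :
    HasProjectiveDimensionLE M n := by
  induction k generalizing M with
  | zero => exact h M hM
  | succ k ih =>
    obtain ⟨V, hV⟩ := exists_isCosyzygy M
    have := ih (hV.widLE hM)
    obtain ⟨I, f, g, hI, hs⟩ := hV
    exact hs.shortExact.hasProjectiveDimensionLT_X₁ (n + 1) (h I (weakInjective_of_injective hI))
      (hasProjectiveDimensionLT_of_ge V (n + 1) _ (by lia))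

end Dimension

end

theorem global_gwid_le_iff_general (h : ∀ M : ModuleCat.{u} R, ∃ m : ℕ, GwidLE R M m) (n : ℕ) :
    ((∀ M : ModuleCat.{u} R, GwidLE R M n) ↔
      ∀ W : ModuleCat.{u} R, WeakInjective R W → PdLE R W n) ∧
    ((∀ W : ModuleCat.{u} R, WeakInjective R W → PdLE R W n) ↔
      ∀ W : ModuleCat.{u} R, (∃ k : ℕ, WidLE R W k) → PdLE R W n) := by
  simp only [pdLE_iff_hasProjectiveDimensionLE]
  exact ⟨forall_coresolutionDimLE_gorensteinRelInjective_iff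
    (fun _ => weakInjective_of_injective) h,
    fun hn _ ⟨_, hk⟩ => hasProjectiveDimensionLE_of_widLE hn hk, fun hn W hW => hn W ⟨0, hW⟩⟩

/-- If the left global Gorenstein weak injective dimension of `R` is finite, then
`ℓ.GwiD(R) ≤ n` iff every weak injective module has projective dimension `≤ n`, iff
every module of finite weak injective dimension has projective dimension `≤ n`. -/
theorem global_gwid_le_iff (h : ∃ m : ℕ, ∀ M : ModuleCat.{u} R, GwidLE R M m) (n : ℕ) :
    ((∀ M : ModuleCat.{u} R, GwidLE R M n) ↔
      ∀ W : ModuleCat.{u} R, WeakInjective R W → PdLE R W n) ∧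
    ((∀ W : ModuleCat.{u} R, WeakInjective R W → PdLE R W n) ↔
      ∀ W : ModuleCat.{u} R, (∃ k : ℕ, WidLE R W k) → PdLE R W n) :=
  global_gwid_le_iff_general R (fun M => h.imp fun _ hm => hm M) n
end
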